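/- Let n ≥ 1. There exist constants ε₀ > 0 and c₂ > 0, depending only on n, with the following property: if K is a smooth, strictly convex body in ℝ^{n+1} with positive support function h containing the origin in its interior, and 1 − ε ≤ h(x)·det(A(x)+x⊗x) ≤ 1 + ε for all x ∈ S^n for some ε ∈ (0, ε₀), then the Hausdorff distance between the normalized body K̄ = (K − c(K))/(⨍ h̃ dθ) and the closed unit ball B satisfies δ_H(K̄, B) ≤ c₂·ε^{1/(n+2)}. -/

import Mathlib

open MeasureTheory Metric Real
open scoped InnerProductSpace ENNReal Topology

noncomputable section

/-- Euclidean space `ℝ^{n+1}`. -/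
abbrev Eu (n : ℕ) : Type := EuclideanSpace ℝ (Fin (n + 1))

/-- The unit sphere `S^n ⊆ ℝ^{n+1}` as a subtype. -/
abbrev Sph (n : ℕ) : Type := Metric.sphere (0 : Eu n) 1

/-- The spherical Lebesgue (surface) measure on `S^n`. -/
def sphMeas (n : ℕ) : Measure (Sph n) := (volume : Measure (Eu n)).toSphere

/-- The support function of a set `K ⊆ ℝ^{n+1}`. -/
def sfn {n : ℕ} (K : Set (Eu n)) (z : Eu n) : ℝ :=
  sSup ((fun y => ⟪z, y⟫_ℝ) '' K)

/-- The Hessian endomorphism `A(x) = D(∇ h_K)(x)`. -/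
def hessA {n : ℕ} (K : Set (Eu n)) (x : Eu n) : Eu n →L[ℝ] Eu n :=
  fderiv ℝ (gradient (sfn K)) x

/-- The rank-one endomorphism `x ⊗ x : v ↦ ⟨v, x⟩ x`. -/
def tens {n : ℕ} (x : Eu n) : Eu n →L[ℝ] Eu n :=
  (innerSL ℝ x).smulRight x

/-- `det (A(x) + x ⊗ x)`, the reciprocal Gauss curvature `1/𝒦` at `x ∈ S^n`. -/
def rK {n : ℕ} (K : Set (Eu n)) (x : Eu n) : ℝ :=
  LinearMap.det ((hessA K x + tens x : Eu n →L[ℝ] Eu n) : Eu n →ₗ[ℝ] Eu n)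

/-- `K` is a smooth, strictly convex body with positive support function. -/
structure IsSmoothConvexBody {n : ℕ} (K : Set (Eu n)) : Prop where
  compact : IsCompact K
  convex : Convex ℝ K
  interior_nonempty : (interior K).Nonempty
  pos : ∀ x : Sph n, 0 < sfn K x
  smooth : ContDiffOn ℝ (⊤ : ℕ∞) (sfn K) {(0 : Eu n)}ᶜ
  posdef : ∀ x : Sph n, ∀ v : Eu n, v ≠ 0 →
    0 < ⟪(hessA K (x : Eu n) + tens (x : Eu n)) v, v⟫_ℝ

/-- The density `h·det(A + x⊗x)` of the measure `dV` with respect to `dθ`. -/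
def dens {n : ℕ} (K : Set (Eu n)) (x : Eu n) : ℝ := sfn K x * rK K x

/-- The centroid-type point `c(K) = (∫ ∇h_K dV)/(∫ dV)`. -/
def cK {n : ℕ} (K : Set (Eu n)) : Eu n :=
  (∫ x : Sph n, dens K x ∂sphMeas n)⁻¹ •
    ∫ x : Sph n, dens K x • gradient (sfn K) x ∂sphMeas n

/-- The support function of the translated body `K - c(K)`. -/
def tsfn {n : ℕ} (K : Set (Eu n)) (x : Eu n) : ℝ := sfn K x - ⟪x, cK K⟫_ℝ


section PL
open scoped Pointwise

lemma bm1_compact (A B S : Set ℝ) (hA : IsCompact A) (hB : IsCompact B) (hA0 : A.Nonempty)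
    (hB0 : B.Nonempty) (hS : ∀ a ∈ A, ∀ b ∈ B, a + b ∈ S) :
    volume A + volume B ≤ volume S := by
  obtain ⟨a, haA, ha⟩ := hA.exists_isGreatest hA0
  obtain ⟨b, hbB, hb⟩ := hB.exists_isLeast hB0
  have h1 : volume ((fun x => b + x) '' A) = volume A := by
    simp
  have h2 : volume ((fun x => a + x) '' B) = volume B := by
    simp
  have hmA : MeasurableSet ((fun x => b + x) '' A) :=
    (hA.image (by fun_prop)).measurableSet
  rw [← h1, ← h2]
  have hd : AEDisjoint volume ((fun x => b + x) '' A) ((fun x => a + x) '' B) := by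
    refine measure_mono_null (t := {a + b}) ?_ (by simp)
    rintro _ ⟨⟨x, hx, rfl⟩, ⟨y, hy, hxy⟩⟩
    have := ha hx
    have := hb hy
    simp only at hxy ⊢
    simp only [Set.mem_singleton_iff]
    linarith
  rw [← measure_union₀' hmA.nullMeasurableSet hd]
  apply measure_mono
  rintro _ (⟨x, hx, rfl⟩ | ⟨y, hy, rfl⟩)
  · have := hS x hx b hbB; simpa [add_comm] using this
  · exact hS a haA y hy

lemma bm1 (A B S : Set ℝ) (hA : MeasurableSet A) (hB : MeasurableSet B) (hA0 : A.Nonempty)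
    (hB0 : B.Nonempty) (hS : ∀ a ∈ A, ∀ b ∈ B, a + b ∈ S) :
    volume A + volume B ≤ volume S := by
  obtain ⟨a, ha⟩ := hA0
  obtain ⟨b, hb⟩ := hB0
  rw [hA.measure_eq_iSup_isCompact, hB.measure_eq_iSup_isCompact]
  simp only [iSup_and']
  refine ENNReal.biSup_add_biSup_le' ⟨∅, by simp⟩ ⟨∅, by simp⟩ ?_
  rintro K ⟨hKA, hK⟩ L ⟨hLB, hL⟩
  calc volume K + volume L ≤ volume (insert a K) + volume (insert b L) := by
        gcongr <;> exact Set.subset_insert _ _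
    _ ≤ volume S := by
        refine bm1_compact _ _ S (hK.insert a) (hL.insert b) ⟨a, by simp⟩ ⟨b, by simp⟩ ?_
        intro x hx y hy
        refine hS x ?_ y ?_
        · rcases hx with rfl | hx
          exacts [ha, hKA hx]
        · rcases hy with rfl | hy
          exacts [hb, hLB hy]

lemma bm1_mid (A B S : Set ℝ) (hA : MeasurableSet A) (hB : MeasurableSet B) (hA0 : A.Nonempty)
    (hB0 : B.Nonempty) (hS : ∀ a ∈ A, ∀ b ∈ B, (a + b) / 2 ∈ S) :
    volume A + volume B ≤ 2 * volume S := by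
  have := bm1 A B ((2:ℝ) • S) hA hB hA0 hB0 (by
    intro a ha b hb
    exact ⟨(a + b) / 2, hS a ha b hb, by simp; ring⟩)
  rw [Measure.addHaar_smul] at this
  simpa using this

lemma pl1_norm (u v w : ℝ → ℝ) (hu : Measurable u) (hv : Measurable v) (hw : Measurable w)
    (u0 : ∀ x, 0 ≤ u x) (v0 : ∀ x, 0 ≤ v x) (w0 : ∀ x, 0 ≤ w x)
    (u1 : ∀ x, u x ≤ 1) (v1 : ∀ x, v x ≤ 1)
    (us : ∀ t < 1, ∃ x, t < u x) (vs : ∀ t < 1, ∃ x, t < v x)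
    (h : ∀ a b t, 0 < t → t < 1 → t < u a → t < v b → t < w ((a + b) / 2)) :
    (∫⁻ x, ENNReal.ofReal (u x)) + (∫⁻ x, ENNReal.ofReal (v x))
      ≤ 2 * ∫⁻ x, ENNReal.ofReal (w x) := by
  rw [lintegral_eq_lintegral_meas_lt _ (.of_forall u0) hu.aemeasurable,
    lintegral_eq_lintegral_meas_lt _ (.of_forall v0) hv.aemeasurable,
    lintegral_eq_lintegral_meas_lt _ (.of_forall w0) hw.aemeasurable]
  have mm : ∀ f : ℝ → ℝ, Measurable fun t => volume {a | t < f a} := by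
    intro f
    apply Antitone.measurable
    intro s t hst
    exact measure_mono fun x (hx : t < f x) => lt_of_le_of_lt hst hx
  rw [← lintegral_add_left (mm u), ← lintegral_const_mul _ (mm w)]
  apply setLIntegral_mono' measurableSet_Ioi
  intro t ht
  by_cases h1 : t < 1
  · refine bm1_mid _ _ _ (measurableSet_lt measurable_const hu) (measurableSet_lt measurable_const hv)
      (us t h1) (vs t h1) ?_
    intro a ha b hb
    exact h a b t ht h1 ha hb
  · have e1 : {a | t < u a} = ∅ := by
      ext x; simp; linarith [u1 x]
    have e2 : {a | t < v a} = ∅ := by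
      ext x; simp; linarith [v1 x]
    simp [e1, e2]

lemma pl1_bdd (u v w : ℝ → ℝ≥0∞) (hu : Measurable u) (hv : Measurable v) (hw : Measurable w)
    (k : NNReal) (uk : ∀ x, u x ≤ k) (vk : ∀ x, v x ≤ k)
    (h : ∀ a b, u a * v b ≤ w ((a + b) / 2) ^ 2) :
    (∫⁻ x, u x) * (∫⁻ x, v x) ≤ (∫⁻ x, w x) ^ 2 := by
  set α := ⨆ x, u x with hα
  set β := ⨆ x, v x with hβ
  have hαk : α ≤ k := iSup_le uk
  have hβk : β ≤ k := iSup_le vk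
  have hαt : α ≠ ⊤ := ne_top_of_le_ne_top ENNReal.coe_ne_top hαk
  have hβt : β ≠ ⊤ := ne_top_of_le_ne_top ENNReal.coe_ne_top hβk
  have hua : ∀ x, u x ≤ α := le_iSup u
  have hvb : ∀ x, v x ≤ β := le_iSup v
  by_cases hα0 : α = 0
  · have : ∀ x, u x = 0 := fun x => by simpa [hα0] using hua x
    simp [this]
  by_cases hβ0 : β = 0
  · have : ∀ x, v x = 0 := fun x => by simpa [hβ0] using hvb x
    simp [this]
  obtain ⟨a, ha⟩ : ∃ a : ℝ, 0 < a ∧ α = ENNReal.ofReal a :=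
    ⟨α.toReal, ENNReal.toReal_pos hα0 hαt, (ENNReal.ofReal_toReal hαt).symm⟩
  obtain ⟨b, hb⟩ : ∃ b : ℝ, 0 < b ∧ β = ENNReal.ofReal b :=
    ⟨β.toReal, ENNReal.toReal_pos hβ0 hβt, (ENNReal.ofReal_toReal hβt).symm⟩
  set γ := ENNReal.ofReal (√(a * b)) with hγ
  have hab : 0 < √(a * b) := Real.sqrt_pos.2 (mul_pos ha.1 hb.1)
  have hγ2 : γ ^ 2 = α * β := by
    rw [ha.2, hb.2, hγ, ← ENNReal.ofReal_pow hab.le, Real.sq_sqrt (mul_pos ha.1 hb.1).le,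
      ENNReal.ofReal_mul ha.1.le]
  have hγ0 : γ ≠ 0 := by simp [hγ, hab]
  have hγt : γ ≠ ⊤ := by simp [hγ]
  have hu1 : ∀ x, u x / α ≤ 1 := fun x => ENNReal.div_le_of_le_mul (by simpa using hua x)
  have hv1 : ∀ x, v x / β ≤ 1 := fun x => ENNReal.div_le_of_le_mul (by simpa using hvb x)
  have hut : ∀ x, u x / α ≠ ⊤ := fun x => ne_top_of_le_ne_top ENNReal.one_ne_top (hu1 x)
  have hvt : ∀ x, v x / β ≠ ⊤ := fun x => ne_top_of_le_ne_top ENNReal.one_ne_top (hv1 x)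
  have hw1 : ∀ x, min (w x / γ) 1 ≠ ⊤ := fun x =>
    ne_top_of_le_ne_top ENNReal.one_ne_top (min_le_right _ _)
  have key := pl1_norm (fun x => (u x / α).toReal) (fun x => (v x / β).toReal)
    (fun x => (min (w x / γ) 1).toReal) (by fun_prop) (by fun_prop) (by fun_prop)
    (fun _ => ENNReal.toReal_nonneg) (fun _ => ENNReal.toReal_nonneg)
    (fun _ => ENNReal.toReal_nonneg)
    (fun x => ENNReal.toReal_le_of_le_ofReal zero_le_one (by simpa using hu1 x))
    (fun x => ENNReal.toReal_le_of_le_ofReal zero_le_one (by simpa using hv1 x))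
    (by
      intro t ht
      by_contra! hc
      have : α ≤ ENNReal.ofReal t * α := by
        refine iSup_le fun x => ?_
        have : u x / α ≤ ENNReal.ofReal t := by
          rw [← ENNReal.ofReal_toReal (hut x)]; exact ENNReal.ofReal_le_ofReal (hc x)
        rwa [ENNReal.div_le_iff hα0 hαt] at this
      have h2 : ENNReal.ofReal t * α < 1 * α :=
        ENNReal.mul_lt_mul_left hα0 hαt (by simpa using ht)
      rw [one_mul] at h2
      exact absurd this (not_le.2 h2))
    (by
      intro t ht
      by_contra! hc
      have : β ≤ ENNReal.ofReal t * β := by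
        refine iSup_le fun x => ?_
        have : v x / β ≤ ENNReal.ofReal t := by
          rw [← ENNReal.ofReal_toReal (hvt x)]; exact ENNReal.ofReal_le_ofReal (hc x)
        rwa [ENNReal.div_le_iff hβ0 hβt] at this
      have h2 : ENNReal.ofReal t * β < 1 * β :=
        ENNReal.mul_lt_mul_left hβ0 hβt (by simpa using ht)
      rw [one_mul] at h2
      exact absurd this (not_le.2 h2))
    (by
      intro x y t ht0 ht1 hx hy
      have h1 : ENNReal.ofReal t < u x / α := (ENNReal.ofReal_lt_iff_lt_toReal ht0.le (hut x)).2 hx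
      have h2 : ENNReal.ofReal t < v y / β := (ENNReal.ofReal_lt_iff_lt_toReal ht0.le (hvt y)).2 hy
      refine (ENNReal.ofReal_lt_iff_lt_toReal ht0.le (hw1 _)).1 (lt_min ?_ (by simpa using ht1))
      have h3 : ENNReal.ofReal t ^ 2 < (w ((x + y) / 2) / γ) ^ 2 := by
        calc ENNReal.ofReal t ^ 2 < (u x / α) * (v y / β) := by
              rw [sq]; exact ENNReal.mul_lt_mul h1 h2
          _ = (u x * v y) / (α * β) := by
              rw [ENNReal.div_eq_inv_mul, ENNReal.div_eq_inv_mul, ENNReal.div_eq_inv_mul,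
                ENNReal.mul_inv (Or.inl hα0) (Or.inl hαt)]; ring
          _ ≤ w ((x + y) / 2) ^ 2 / γ ^ 2 := by rw [hγ2]; gcongr; exact h x y
          _ = _ := by rw [ENNReal.div_eq_inv_mul, ENNReal.div_eq_inv_mul, mul_pow, ENNReal.inv_pow]
      exact lt_of_not_ge fun hc => absurd h3 (not_lt.2 (by gcongr)))
  simp only [ENNReal.ofReal_toReal (hut _), ENNReal.ofReal_toReal (hvt _),
    ENNReal.ofReal_toReal (hw1 _)] at key
  have key2 : ∫⁻ x, min (w x / γ) 1 ≤ (∫⁻ x, w x) / γ := by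
    rw [ENNReal.div_eq_inv_mul, ← lintegral_const_mul _ hw]
    apply lintegral_mono
    intro x
    simp only [ENNReal.div_eq_inv_mul]
    exact min_le_left _ _
  have eu : ∫⁻ x, u x / α = (∫⁻ x, u x) / α := by
    simp only [ENNReal.div_eq_inv_mul]; exact lintegral_const_mul _ hu
  have ev : ∫⁻ x, v x / β = (∫⁻ x, v x) / β := by
    simp only [ENNReal.div_eq_inv_mul]; exact lintegral_const_mul _ hv
  rw [eu, ev] at key
  set U := ∫⁻ x, u x
  set V := ∫⁻ x, v x
  set W := ∫⁻ x, w x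
  have key3 : U / α + V / β ≤ 2 * (W / γ) := key.trans (by gcongr)
  by_cases hW : W = ⊤
  · simp [hW]
  have hWγ : W / γ ≠ ⊤ := ENNReal.div_ne_top hW hγ0
  have hsum : U / α + V / β ≠ ⊤ := ne_top_of_le_ne_top (ENNReal.mul_ne_top (by simp) hWγ) key3
  have hUt : U / α ≠ ⊤ := (ENNReal.add_ne_top.1 hsum).1
  have hVt : V / β ≠ ⊤ := (ENNReal.add_ne_top.1 hsum).2
  have amgm : (U / α) * (V / β) ≤ (W / γ) ^ 2 := by
    rw [← ENNReal.toReal_le_toReal (ENNReal.mul_ne_top hUt hVt) (ENNReal.pow_ne_top hWγ)]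
    have := (ENNReal.toReal_le_toReal hsum (ENNReal.mul_ne_top (by simp) hWγ)).2 key3
    rw [ENNReal.toReal_add hUt hVt, ENNReal.toReal_mul] at this
    rw [ENNReal.toReal_mul, ENNReal.toReal_pow]
    have p1 : 0 ≤ (U / α).toReal := ENNReal.toReal_nonneg
    have p2 : 0 ≤ (V / β).toReal := ENNReal.toReal_nonneg
    simp only [ENNReal.toReal_ofNat] at this
    nlinarith [sq_nonneg ((U / α).toReal - (V / β).toReal)]
  calc U * V = (α * β) * ((U / α) * (V / β)) := by
        rw [mul_mul_mul_comm, ENNReal.mul_div_cancel hα0 hαt, ENNReal.mul_div_cancel hβ0 hβt]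
    _ ≤ γ ^ 2 * (W / γ) ^ 2 := by rw [hγ2]; gcongr
    _ = W ^ 2 := by rw [← mul_pow, ENNReal.mul_div_cancel hγ0 hγt]

lemma pl1 (u v w : ℝ → ℝ≥0∞) (hu : Measurable u) (hv : Measurable v) (hw : Measurable w)
    (h : ∀ a b, u a * v b ≤ w ((a + b) / 2) ^ 2) :
    (∫⁻ x, u x) * (∫⁻ x, v x) ≤ (∫⁻ x, w x) ^ 2 := by
  have lim : ∀ f : ℝ → ℝ≥0∞, Measurable f →
      Filter.Tendsto (fun k : ℕ => ∫⁻ x, min (f x) k) Filter.atTop (𝓝 (∫⁻ x, f x)) := by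
    intro f hf
    refine lintegral_tendsto_of_tendsto_of_monotone (fun k => by fun_prop) ?_ ?_
    · refine .of_forall fun x m n hmn => ?_
      simp only
      gcongr
    · refine .of_forall fun x => ?_
      have : Filter.Tendsto (fun k : ℕ => min (f x) (k : ℝ≥0∞)) Filter.atTop (𝓝 (min (f x) ⊤)) :=
        tendsto_const_nhds.min ENNReal.tendsto_nat_nhds_top
      simpa using this
  by_cases hW : (∫⁻ x, w x) = ⊤
  · simp [hW]
  have bd : ∀ k : ℕ, (∫⁻ x, min (u x) k) * (∫⁻ x, min (v x) k) ≤ (∫⁻ x, w x) ^ 2 := by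
    intro k
    refine pl1_bdd _ _ _ (by fun_prop) (by fun_prop) hw k (fun x => by simp) (fun x => by simp) ?_
    intro a b
    refine le_trans ?_ (h a b)
    gcongr <;> exact min_le_left _ _
  have mono : ∀ f : ℝ → ℝ≥0∞, Monotone fun k : ℕ => ∫⁻ x, min (f x) k := by
    intro f m n hmn
    apply lintegral_mono
    intro x
    simp only
    gcongr
  have su : (∫⁻ x, u x) = ⨆ k : ℕ, ∫⁻ x, min (u x) k :=
    tendsto_nhds_unique (lim u hu) (tendsto_atTop_iSup (mono u))
  have sv : (∫⁻ x, v x) = ⨆ k : ℕ, ∫⁻ x, min (v x) k :=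
    tendsto_nhds_unique (lim v hv) (tendsto_atTop_iSup (mono v))
  rw [su, sv]
  rw [ENNReal.iSup_mul]
  refine iSup_le fun i => ?_
  rw [ENNReal.mul_iSup]
  refine iSup_le fun j => ?_
  refine le_trans ?_ (bd (max i j))
  exact mul_le_mul' (mono u (le_max_left _ _)) (mono v (le_max_right _ _))

lemma plN (N : ℕ) : ∀ (u v w : (Fin N → ℝ) → ℝ≥0∞), Measurable u → Measurable v → Measurable w →
    (∀ a b, u a * v b ≤ w (fun i => (a i + b i) / 2) ^ 2) →
    (∫⁻ x, u x) * (∫⁻ x, v x) ≤ (∫⁻ x, w x) ^ 2 := by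
  induction N with
  | zero =>
    intro u v w hu hv hw h
    rw [volume_pi, Measure.pi_of_empty (x := fun i => i.elim0)]
    rw [lintegral_dirac' _ hu, lintegral_dirac' _ hv, lintegral_dirac' _ hw]
    convert h (fun i => i.elim0) (fun i => i.elim0) using 3
  | succ N ih =>
    intro u v w hu hv hw h
    have mp := (volume_preserving_piFinSuccAbove (fun _ : Fin (N + 1) => ℝ) 0).symm
    have ec : ∀ p : ℝ × (Fin N → ℝ),
        (MeasurableEquiv.piFinSuccAbove (fun _ : Fin (N + 1) => ℝ) 0).symm p
          = (Fin.cons p.1 p.2 : Fin (N+1) → ℝ) := by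
      intro p
      simp [MeasurableEquiv.piFinSuccAbove, Fin.insertNthEquiv]
    have e : ∀ f : (Fin (N+1) → ℝ) → ℝ≥0∞, Measurable f →
        ∫⁻ x, f x = ∫⁻ a : ℝ, ∫⁻ y : Fin N → ℝ, f (Fin.cons a y) := by
      intro f hf
      rw [← mp.lintegral_comp hf, Measure.volume_eq_prod, lintegral_prod]
      · simp only [ec]
      · exact (hf.comp (MeasurableEquiv.measurable _)).aemeasurable
    have mcons : Measurable fun p : ℝ × (Fin N → ℝ) => (Fin.cons p.1 p.2 : Fin (N+1) → ℝ) := by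
      simp only [← ec]
      exact (MeasurableEquiv.piFinSuccAbove (fun _ : Fin (N + 1) => ℝ) 0).symm.measurable
    have m : ∀ f : (Fin (N+1) → ℝ) → ℝ≥0∞, Measurable f →
        Measurable fun a : ℝ => ∫⁻ y : Fin N → ℝ, f (Fin.cons a y) := by
      intro f hf
      exact Measurable.lintegral_prod_right' (f := fun p : ℝ × (Fin N → ℝ) => f (Fin.cons p.1 p.2))
        (hf.comp mcons)
    have m' : ∀ f : (Fin (N+1) → ℝ) → ℝ≥0∞, Measurable f → ∀ a : ℝ,
        Measurable fun y : Fin N → ℝ => f (Fin.cons a y) := by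
      intro f hf a
      exact hf.comp (mcons.comp measurable_prodMk_left)
    rw [e u hu, e v hv, e w hw]
    refine pl1 _ _ _ (m u hu) (m v hv) (m w hw) ?_
    intro a b
    refine ih _ _ _ (m' u hu a) (m' v hv b) (m' w hw _) ?_
    intro x y
    convert h (Fin.cons a x) (Fin.cons b y) using 3
    funext i
    refine Fin.cases ?_ (fun j => ?_) i <;> simp

lemma plE (N : ℕ) (u v w : EuclideanSpace ℝ (Fin N) → ℝ≥0∞) (hu : Measurable u) (hv : Measurable v)
    (hw : Measurable w)
    (h : ∀ a b, u a * v b ≤ w ((1/2 : ℝ) • (a + b)) ^ 2) :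
    (∫⁻ x, u x) * (∫⁻ x, v x) ≤ (∫⁻ x, w x) ^ 2 := by
  have mp := PiLp.volume_preserving_toLp (Fin N)
  rw [← mp.lintegral_comp hu, ← mp.lintegral_comp hv, ← mp.lintegral_comp hw]
  refine plN N _ _ _ (hu.comp mp.measurable) (hv.comp mp.measurable) (hw.comp mp.measurable) ?_
  intro a b
  convert h (WithLp.toLp 2 a) (WithLp.toLp 2 b) using 3
  ext i
  simp; ring

end PL

lemma exp_cubic (x : ℝ) : 1 + x + x ^ 2 / 2 + x ^ 3 / 6 ≤ Real.exp x := by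
  rcases le_total 0 x with hx | hx
  · have := Real.sum_le_exp_of_nonneg hx 4
    simp [Finset.sum_range_succ, Nat.factorial] at this
    linarith
  · have hm : MonotoneOn (fun x : ℝ => (1 + x + x ^ 2 / 2 + x ^ 3 / 6) * Real.exp (-x)) (Set.Iic 0) := by
      have hd : ∀ x : ℝ, HasDerivAt (fun x : ℝ => (1 + x + x ^ 2 / 2 + x ^ 3 / 6) * Real.exp (-x))
          (-(x ^ 3 / 6) * Real.exp (-x)) x := by
        intro x
        have h1 : HasDerivAt (fun x : ℝ => 1 + x + x ^ 2 / 2 + x ^ 3 / 6)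
            (1 + 2 * x / 2 + 3 * x ^ 2 / 6) x := by
          have := (((hasDerivAt_id x).const_add 1).add ((hasDerivAt_pow 2 x).div_const 2)).add
            ((hasDerivAt_pow 3 x).div_const 6)
          refine this.congr_deriv ?_
          simp
        have h2 : HasDerivAt (fun x : ℝ => Real.exp (-x)) (-Real.exp (-x)) x := by
          simpa using (hasDerivAt_neg x).exp
        refine (h1.mul h2).congr_deriv ?_
        ring
      apply monotoneOn_of_deriv_nonneg (convex_Iic 0)
      · exact fun x _ => (hd x).continuousAt.continuousWithinAt
      · exact fun x _ => (hd x).differentiableAt.differentiableWithinAt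
      · intro x hx
        rw [(hd x).deriv]
        simp only [interior_Iic, Set.mem_Iio] at hx
        have : x ^ 3 ≤ 0 := by
          have := pow_nonneg (neg_nonneg.2 hx.le) 3
          nlinarith
        exact mul_nonneg (by linarith) (Real.exp_pos _).le
    have := hm (Set.mem_Iic.2 hx) (Set.mem_Iic.2 le_rfl) hx
    simp only [Real.exp_neg] at this
    norm_num at this
    rw [← div_eq_mul_inv, div_le_one (Real.exp_pos x)] at this
    exact this

lemma integrable_gauss (N : ℕ) (κ : ℝ) (hκ : 0 < κ) :
    Integrable (fun y : EuclideanSpace ℝ (Fin N) => Real.exp (-κ * ‖y‖ ^ 2)) := by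
  have := (GaussianFourier.integrable_cexp_neg_mul_sq_norm_add (V := EuclideanSpace ℝ (Fin N))
    (b := (κ : ℂ)) (by simpa using hκ) 0 0).norm
  refine this.congr (.of_forall fun y => ?_)
  simp [Complex.norm_exp]
  norm_cast
  exact Or.inl rfl

lemma var_of_pl (N : ℕ) (V f : EuclideanSpace ℝ (Fin N) → ℝ) (hV : Measurable V) (hf : Measurable f)
    (q : ℕ → EuclideanSpace ℝ (Fin N) → ℝ) (q0 : EuclideanSpace ℝ (Fin N) → ℝ)
    (κ C : ℝ) (hκ : 0 < κ) (hC : 0 ≤ C) (hVκ : ∀ y, κ * ‖y‖ ^ 2 ≤ V y) (hfC : ∀ y, |f y| ≤ C * ‖y‖)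
    (hq : ∀ k, Measurable (q k)) (hqC : ∀ k m, |q k m| ≤ C)
    (hlim : ∀ᵐ m, Filter.Tendsto (fun k => q k m) Filter.atTop (𝓝 (q0 m)))
    (hineq : ∀ (k : ℕ) a b, 2 * V ((1/2 : ℝ) • (a + b))
        - (1 / ((k : ℝ) + 1)) ^ 2 * q k ((1/2 : ℝ) • (a + b))
      ≤ V a - (1 / ((k : ℝ) + 1)) * f a + (V b + (1 / ((k : ℝ) + 1)) * f b))
    (hmean : ∫ y, f y * Real.exp (-V y) = 0) :
    Integrable (fun y => f y * Real.exp (-V y)) ∧ Integrable (fun y => f y ^ 2 * Real.exp (-V y)) ∧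
    Integrable (fun y => q0 y * Real.exp (-V y)) ∧
    ∫ y, f y ^ 2 * Real.exp (-V y) ≤ ∫ y, q0 y * Real.exp (-V y) := by
  have hexpf : ∀ y, Real.exp |f y| ≤ Real.exp (C ^ 2 / (2 * κ)) * Real.exp (κ / 2 * ‖y‖ ^ 2) := by
    intro y
    rw [← Real.exp_add]
    apply Real.exp_le_exp.2
    refine (hfC y).trans ?_
    rw [div_add' _ _ _ (by positivity), le_div_iff₀ (by positivity)]
    nlinarith [sq_nonneg (C - κ * ‖y‖)]
  have int : ∀ (g : EuclideanSpace ℝ (Fin N) → ℝ) (A : ℝ), Measurable g →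
      (∀ y, |g y| ≤ A * Real.exp |f y|) → Integrable (fun y => g y * Real.exp (-V y)) := by
    intro g A hg hgA
    have hd := ((integrable_gauss N (κ / 2) (by positivity)).const_mul
      (|A| * Real.exp (C ^ 2 / (2 * κ))))
    refine hd.mono' (by fun_prop) (.of_forall fun y => ?_)
    rw [norm_mul, Real.norm_eq_abs, Real.norm_eq_abs, abs_of_pos (Real.exp_pos _)]
    calc |g y| * Real.exp (-V y)
        ≤ (|A| * (Real.exp (C ^ 2 / (2 * κ)) * Real.exp (κ / 2 * ‖y‖ ^ 2))) *
            Real.exp (-(κ * ‖y‖ ^ 2)) := by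
          gcongr
          · exact (hgA y).trans ((mul_le_mul_of_nonneg_right (le_abs_self A) (Real.exp_pos _).le).trans
              (by gcongr; exact hexpf y))
          · exact hVκ y
      _ = _ := by
          rw [mul_assoc, mul_assoc, ← Real.exp_add, ← mul_assoc]
          congr 2
          ring
  have one_le : ∀ y, 1 ≤ Real.exp |f y| := fun y => Real.one_le_exp (abs_nonneg _)
  have i0 : Integrable (fun y => (1 : ℝ) * Real.exp (-V y)) :=
    int (fun _ => 1) 1 measurable_const (fun y => by simp)
  have ipow : ∀ j : ℕ, Integrable (fun y => f y ^ j * Real.exp (-V y)) := by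
    intro j
    refine int _ (j.factorial) (by fun_prop) fun y => ?_
    have := Real.pow_div_factorial_le_exp |f y| (abs_nonneg _) j
    rw [div_le_iff₀ (by positivity)] at this
    rw [abs_pow]; linarith
  have iq : ∀ k, Integrable (fun y => q k y * Real.exp (-V y)) := fun k =>
    int _ C (hq k) fun y => (hqC k y).trans (by nlinarith [one_le y])
  have hq0C : ∀ᵐ m, |q0 m| ≤ C := by
    filter_upwards [hlim] with m hm
    exact le_of_tendsto hm.abs (.of_forall fun k => hqC k m)
  have mq0 : AEMeasurable q0 :=
    aemeasurable_of_tendsto_metrizable_ae Filter.atTop (fun k => (hq k).aemeasurable) hlim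
  have dct : Filter.Tendsto (fun k => ∫ y, q k y * Real.exp (-V y)) Filter.atTop
      (𝓝 (∫ y, q0 y * Real.exp (-V y))) := by
    refine tendsto_integral_of_dominated_convergence (fun y => C * (1 * Real.exp (-V y)))
      (fun k => (iq k).aestronglyMeasurable) (i0.const_mul C) ?_ ?_
    · intro k
      refine .of_forall fun y => ?_
      rw [norm_mul, Real.norm_eq_abs, Real.norm_eq_abs, abs_of_pos (Real.exp_pos _), one_mul]
      gcongr
      exact hqC k y
    · filter_upwards [hlim] with m hm
      exact hm.mul_const _
  have iq0 : Integrable (fun y => q0 y * Real.exp (-V y)) := by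
    refine (i0.const_mul C).mono' (by fun_prop) ?_
    filter_upwards [hq0C] with y hy
    rw [norm_mul, Real.norm_eq_abs, Real.norm_eq_abs, abs_of_pos (Real.exp_pos _), one_mul]
    gcongr
  refine ⟨by simpa using ipow 1, ipow 2, iq0, ?_⟩
  set Z := ∫ y, (1 : ℝ) * Real.exp (-V y) with hZ
  set M := ∫ y, f y ^ 2 * Real.exp (-V y) with hM
  set M3 := ∫ y, f y ^ 3 * Real.exp (-V y) with hM3
  set B := fun k => ∫ y, q k y * Real.exp (-V y) with hB
  have hZpos : 0 < Z := by
    rw [hZ, integral_pos_iff_support_of_nonneg (fun y => by positivity) i0]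
    have : Function.support (fun y => (1:ℝ) * Real.exp (-V y)) = Set.univ := by
      ext y; simp
    rw [this]
    exact isOpen_univ.measure_pos _ Set.univ_nonempty
  -- lower bound for the integrals with tilts
  have low : ∀ s : ℝ, |s| ≤ 1 → Z + s ^ 2 / 2 * M + s ^ 3 / 6 * M3 ≤
      ∫ y, Real.exp (s * f y) * Real.exp (-V y) := by
    intro s hs
    have is : Integrable (fun y => Real.exp (s * f y) * Real.exp (-V y)) := by
      refine int _ 1 (by fun_prop) fun y => ?_
      rw [abs_of_pos (Real.exp_pos _), one_mul]
      apply Real.exp_le_exp.2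
      refine (le_abs_self _).trans ?_
      rw [abs_mul]
      exact mul_le_of_le_one_left (abs_nonneg _) hs
    have i1 := ipow 1
    simp only [pow_one] at i1
    have e : Z + s ^ 2 / 2 * M + s ^ 3 / 6 * M3 = ∫ y, ((1 * Real.exp (-V y) +
        s * (f y * Real.exp (-V y))) + s ^ 2 / 2 * (f y ^ 2 * Real.exp (-V y)))
          + s ^ 3 / 6 * (f y ^ 3 * Real.exp (-V y)) := by
      have c1 : ∫ y, s * (f y * Real.exp (-V y)) = 0 := by
        rw [integral_const_mul, hmean, mul_zero]
      have c2 : ∫ y, s ^ 2 / 2 * (f y ^ 2 * Real.exp (-V y)) = s ^ 2 / 2 * M := integral_const_mul _ _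
      have c3 : ∫ y, s ^ 3 / 6 * (f y ^ 3 * Real.exp (-V y)) = s ^ 3 / 6 * M3 := integral_const_mul _ _
      rw [integral_add, integral_add, integral_add, c1, c2, c3, ← hZ, add_zero]
      · exact i0
      · exact i1.const_mul _
      · exact i0.add (i1.const_mul _)
      · exact (ipow 2).const_mul _
      · exact (i0.add (i1.const_mul _)).add ((ipow 2).const_mul _)
      · exact (ipow 3).const_mul _
    rw [e]
    refine integral_mono (((i0.add (i1.const_mul _)).add ((ipow 2).const_mul _)).add
      ((ipow 3).const_mul _)) is fun y => ?_
    have := mul_le_mul_of_nonneg_right (exp_cubic (s * f y)) (Real.exp_pos (-V y)).le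
    simp only
    refine le_trans (le_of_eq ?_) this
    ring
  -- the main inequality for fixed k
  have main : ∀ k : ℕ, C / 2 * (1 / ((k : ℝ) + 1)) ^ 2 ≤ 1 →
      0 ≤ 2 * Z * ((B k / 2 + (1 / ((k : ℝ) + 1)) ^ 2 * (C ^ 2 / 4 * Z)) - M / 2)
        + (1 / ((k : ℝ) + 1)) ^ 2 * ((B k / 2 + (1 / ((k : ℝ) + 1)) ^ 2 * (C ^ 2 / 4 * Z)) ^ 2
          - (M / 2) ^ 2) + (1 / ((k : ℝ) + 1)) ^ 4 * (M3 ^ 2 / 36) := by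
    intro k hk
    have ineqk := hineq k
    set s := 1 / ((k : ℝ) + 1) with hs
    have hs0 : 0 < s := by positivity
    have hs1 : s ≤ 1 := by
      rw [hs, div_le_one (by positivity)]
      linarith [(Nat.cast_nonneg k : (0:ℝ) ≤ k)]
    have habs : |s| ≤ 1 := by rw [abs_of_pos hs0]; exact hs1
    have habs' : |-s| ≤ 1 := by rw [abs_neg]; exact habs
    have l1 := low s habs
    have l2 := low (-s) habs'
    have isg : ∀ s' : ℝ, |s'| ≤ 1 →
        Integrable (fun y => Real.exp (s' * f y) * Real.exp (-V y)) := by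
      intro s' hs'
      refine int _ 1 (by fun_prop) fun y => ?_
      rw [abs_of_pos (Real.exp_pos _), one_mul]
      apply Real.exp_le_exp.2
      refine (le_abs_self _).trans ?_
      rw [abs_mul]
      exact mul_le_of_le_one_left (abs_nonneg _) hs'
    have xb : ∀ y, |s ^ 2 / 2 * q k y| ≤ C / 2 * s ^ 2 := by
      intro y
      rw [abs_mul, abs_of_pos (by positivity)]
      nlinarith [hqC k y, sq_nonneg s]
    have iw : Integrable (fun y => Real.exp (s ^ 2 / 2 * q k y) * Real.exp (-V y)) := by
      have := hq k
      refine int _ (Real.exp (C / 2 * s ^ 2)) (by fun_prop) fun y => ?_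
      rw [abs_of_pos (Real.exp_pos _)]
      have : Real.exp (s ^ 2 / 2 * q k y) ≤ Real.exp (C / 2 * s ^ 2) :=
        Real.exp_le_exp.2 ((le_abs_self _).trans (xb y))
      nlinarith [one_le y, Real.exp_pos (C / 2 * s ^ 2)]
    have up : ∫ y, Real.exp (s ^ 2 / 2 * q k y) * Real.exp (-V y) ≤
        Z + s ^ 2 * (B k / 2 + s ^ 2 * (C ^ 2 / 4 * Z)) := by
      have e : Z + s ^ 2 * (B k / 2 + s ^ 2 * (C ^ 2 / 4 * Z)) =
          ∫ y, (1 + s ^ 4 * C ^ 2 / 4) * (1 * Real.exp (-V y)) +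
            s ^ 2 / 2 * (q k y * Real.exp (-V y)) := by
        have c1 : ∫ y, (1 + s ^ 4 * C ^ 2 / 4) * (1 * Real.exp (-V y)) =
          (1 + s ^ 4 * C ^ 2 / 4) * Z := integral_const_mul _ _
        have c2 : ∫ y, s ^ 2 / 2 * (q k y * Real.exp (-V y)) = s ^ 2 / 2 * B k :=
          integral_const_mul _ _
        rw [integral_add (i0.const_mul _) ((iq k).const_mul _), c1, c2]
        ring
      rw [e]
      refine integral_mono iw ((i0.const_mul _).add ((iq k).const_mul _)) fun y => ?_
      have h1 := Real.abs_exp_sub_one_sub_id_le ((xb y).trans hk)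
      have h2 := (abs_le.1 h1).2
      have h3 : (s ^ 2 / 2 * q k y) ^ 2 ≤ (C / 2 * s ^ 2) ^ 2 := by
        rw [← sq_abs]; exact pow_le_pow_left₀ (abs_nonneg _) (xb y) 2
      have h4 : Real.exp (s ^ 2 / 2 * q k y) ≤ (1 + s ^ 4 * C ^ 2 / 4) + s ^ 2 / 2 * q k y := by
        nlinarith
      have := mul_le_mul_of_nonneg_right h4 (Real.exp_pos (-V y)).le
      simp only
      linarith
    have pl : (∫ y, Real.exp (s * f y) * Real.exp (-V y)) *
        (∫ y, Real.exp (-s * f y) * Real.exp (-V y)) ≤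
        (∫ y, Real.exp (s ^ 2 / 2 * q k y) * Real.exp (-V y)) ^ 2 := by
      have hqk := hq k
      have := plE N (fun y => ENNReal.ofReal (Real.exp (s * f y) * Real.exp (-V y)))
        (fun y => ENNReal.ofReal (Real.exp (-s * f y) * Real.exp (-V y)))
        (fun y => ENNReal.ofReal (Real.exp (s ^ 2 / 2 * q k y) * Real.exp (-V y)))
        (by fun_prop) (by fun_prop) (by fun_prop) (by
          intro a b
          rw [← ENNReal.ofReal_mul (by positivity), ← ENNReal.ofReal_pow (by positivity)]
          apply ENNReal.ofReal_le_ofReal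
          rw [← Real.exp_add, ← Real.exp_add, ← Real.exp_add, ← Real.exp_add, ← Real.exp_nat_mul]
          apply Real.exp_le_exp.2
          have := ineqk a b
          push_cast
          linarith)
      rw [← ofReal_integral_eq_lintegral_ofReal (isg s habs) (.of_forall fun y => by positivity),
        ← ofReal_integral_eq_lintegral_ofReal (isg (-s) habs') (.of_forall fun y => by positivity),
        ← ofReal_integral_eq_lintegral_ofReal iw (.of_forall fun y => by positivity),
        ← ENNReal.ofReal_mul (integral_nonneg fun y => by positivity),
        ← ENNReal.ofReal_pow (integral_nonneg fun y => by positivity)] at this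
      exact (ENNReal.ofReal_le_ofReal_iff (by positivity)).1 this
    have w0 : 0 ≤ ∫ y, Real.exp (s ^ 2 / 2 * q k y) * Real.exp (-V y) :=
      integral_nonneg fun y => by positivity
    have pl2 := pl.trans (pow_le_pow_left₀ w0 up 2)
    set a := B k / 2 + s ^ 2 * (C ^ 2 / 4 * Z) with ha
    set P := ∫ y, Real.exp (s * f y) * Real.exp (-V y)
    set P' := ∫ y, Real.exp (-s * f y) * Real.exp (-V y)
    have hP : 0 ≤ P := integral_nonneg fun y => by positivity
    have hP' : 0 ≤ P' := integral_nonneg fun y => by positivity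
    have hM0 : 0 ≤ M := integral_nonneg fun y => by positivity
    have prod : (Z + s ^ 2 / 2 * M + s ^ 3 / 6 * M3) * (Z + s ^ 2 / 2 * M - s ^ 3 / 6 * M3)
        ≤ P * P' := by
      have l2' : Z + s ^ 2 / 2 * M - s ^ 3 / 6 * M3 ≤ P' := by
        refine le_trans (le_of_eq ?_) l2
        ring
      by_cases hc : 0 ≤ Z + s ^ 2 / 2 * M - s ^ 3 / 6 * M3
      · exact mul_le_mul l1 l2' hc hP
      · have hpos : 0 < Z + s ^ 2 / 2 * M := by positivity
        have : 0 ≤ Z + s ^ 2 / 2 * M + s ^ 3 / 6 * M3 := by linarith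
        have h1 : (Z + s ^ 2 / 2 * M + s ^ 3 / 6 * M3) * (Z + s ^ 2 / 2 * M - s ^ 3 / 6 * M3) ≤ 0 :=
          mul_nonpos_of_nonneg_of_nonpos this (by linarith)
        exact h1.trans (mul_nonneg hP hP')
    have fin := prod.trans pl2
    have : 0 ≤ s ^ 2 * (2 * Z * (a - M / 2) + s ^ 2 * (a ^ 2 - (M / 2) ^ 2)
        + s ^ 4 * (M3 ^ 2 / 36)) := by
      nlinarith [fin]
    exact nonneg_of_mul_nonneg_right this (by positivity)
  have hs : Filter.Tendsto (fun k : ℕ => 1 / ((k : ℝ) + 1)) Filter.atTop (𝓝 0) :=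
    tendsto_one_div_add_atTop_nhds_zero_nat
  have ev : ∀ᶠ k : ℕ in Filter.atTop, C / 2 * (1 / ((k : ℝ) + 1)) ^ 2 ≤ 1 := by
    have : Filter.Tendsto (fun k : ℕ => C / 2 * (1 / ((k : ℝ) + 1)) ^ 2) Filter.atTop
        (𝓝 (C / 2 * 0 ^ 2)) := (hs.pow 2).const_mul _
    have h2 := this.eventually_lt_const (u := 1) (by norm_num)
    exact h2.mono fun k hk => hk.le
  have lim := (((((dct.div_const 2).add ((hs.pow 2).mul_const (C ^ 2 / 4 * Z))).sub_const
    (M / 2)).const_mul (2 * Z)).add ((hs.pow 2).mul ((((dct.div_const 2).add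
      ((hs.pow 2).mul_const (C ^ 2 / 4 * Z))).pow 2).sub_const ((M / 2) ^ 2)))).add
        ((hs.pow 4).mul_const (M3 ^ 2 / 36))
  have fin := ge_of_tendsto lim (ev.mono fun k hk => main k hk)
  simp only [ne_eq, OfNat.ofNat_ne_zero, not_false_eq_true, zero_pow, zero_mul, add_zero] at fin
  have : 0 ≤ (∫ y, q0 y * Real.exp (-V y)) / 2 - M / 2 :=
    nonneg_of_mul_nonneg_right fin (by positivity)
  linarith

section supp
variable {n : ℕ} {K : Set (Eu n)}

lemma sfn_bdd (hc : IsCompact K) (z : Eu n) : BddAbove ((fun y => ⟪z, y⟫_ℝ) '' K) :=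
  hc.bddAbove_image (by fun_prop)

lemma le_sfn (hc : IsCompact K) (z : Eu n) {y : Eu n} (hy : y ∈ K) : ⟪z, y⟫_ℝ ≤ sfn K z :=
  le_csSup (sfn_bdd hc z) ⟨y, hy, rfl⟩

lemma sfn_max (hc : IsCompact K) (hne : K.Nonempty) (z : Eu n) :
    ∃ y ∈ K, ⟪z, y⟫_ℝ = sfn K z := by
  obtain ⟨y, hy, h⟩ := hc.exists_sSup_image_eq hne (f := fun y => ⟪z, y⟫_ℝ) (by fun_prop)
  exact ⟨y, hy, h.symm⟩

lemma sfn_le (hne : K.Nonempty) (z : Eu n) {b : ℝ} (h : ∀ y ∈ K, ⟪z, y⟫_ℝ ≤ b) :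
    sfn K z ≤ b := by
  apply csSup_le (hne.image _)
  rintro _ ⟨y, hy, rfl⟩
  exact h y hy

lemma sfn_smul (hc : IsCompact K) (hne : K.Nonempty) {t : ℝ} (ht : 0 ≤ t) (z : Eu n) :
    sfn K (t • z) = t * sfn K z := by
  apply le_antisymm
  · apply sfn_le hne
    intro y hy
    rw [real_inner_smul_left]
    exact mul_le_mul_of_nonneg_left (le_sfn hc z hy) ht
  · obtain ⟨y, hy, h⟩ := sfn_max hc hne z
    rw [← h, ← real_inner_smul_left]
    exact le_sfn hc _ hy

lemma sfn_zero (hne : K.Nonempty) : sfn K 0 = 0 := by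
  simp only [sfn, inner_zero_left]
  rw [hne.image_const]; simp

lemma sfn_add_le (hc : IsCompact K) (hne : K.Nonempty) (z w : Eu n) :
    sfn K (z + w) ≤ sfn K z + sfn K w := by
  apply sfn_le hne
  intro y hy
  rw [inner_add_left]
  exact add_le_add (le_sfn hc z hy) (le_sfn hc w hy)

variable (hK : IsSmoothConvexBody K)
include hK

lemma IsSmoothConvexBody.ne : K.Nonempty := hK.interior_nonempty.mono interior_subset

lemma sfn_pos {z : Eu n} (hz : z ≠ 0) : 0 < sfn K z := by
  have hz' : 0 < ‖z‖ := norm_pos_iff.2 hz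
  have := hK.pos ⟨‖z‖⁻¹ • z, by simp [norm_smul, hz'.ne']⟩
  simp only at this
  rw [sfn_smul hK.compact hK.ne (by positivity)] at this
  exact (mul_pos_iff_of_pos_left (by positivity)).1 this

lemma sfn_cda {z : Eu n} (hz : z ≠ 0) : ContDiffAt ℝ (⊤ : ℕ∞) (sfn K) z :=
  (hK.smooth z hz).contDiffAt (isOpen_compl_singleton.mem_nhds hz)

lemma sfn_hasGrad {z : Eu n} (hz : z ≠ 0) : HasGradientAt (sfn K) (gradient (sfn K) z) z :=
  ((sfn_cda hK hz).differentiableAt (by simp)).hasGradientAt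

lemma grad_cda {z : Eu n} (hz : z ≠ 0) : ContDiffAt ℝ (⊤ : ℕ∞) (gradient (sfn K)) z := by
  have h1 : ContDiffAt ℝ (⊤ : ℕ∞) (fderiv ℝ (sfn K)) z :=
    (sfn_cda hK hz).fderiv_right (by simp)
  exact ((InnerProductSpace.toDual ℝ (Eu n)).symm.toContinuousLinearEquiv.contDiff.contDiffAt.comp z h1)

lemma grad_hasFDeriv {z : Eu n} (hz : z ≠ 0) :
    HasFDerivAt (gradient (sfn K)) (hessA K z) z :=
  ((grad_cda hK hz).differentiableAt (by simp)).hasFDerivAt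

lemma hess_cont {z : Eu n} (hz : z ≠ 0) : ContinuousAt (hessA K) z :=
  ((grad_cda hK hz).fderiv_right (m := 0) (by simp)).continuousAt

lemma grad_eq {z y : Eu n} (hz : z ≠ 0) (hy : y ∈ K) (h : ⟪z, y⟫_ℝ = sfn K z) :
    gradient (sfn K) z = y := by
  have h1 : IsLocalMin (fun w => sfn K w - ⟪y, w⟫_ℝ) z := by
    refine .of_forall fun w => ?_
    have := le_sfn hK.compact w hy
    simp only [real_inner_comm] at *
    linarith
  have h2 := (sfn_hasGrad hK hz).hasFDerivAt.sub (innerSL ℝ y).hasFDerivAt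
  have h3 := h1.hasFDerivAt_eq_zero h2
  rw [← sub_eq_zero]
  refine ext_inner_right ℝ fun v => ?_
  have := congrArg (fun L => L v) h3
  simp only [sub_apply, InnerProductSpace.toDual_apply_apply, innerSL_apply_apply,
    zero_apply] at this
  rw [inner_sub_left, this, inner_zero_left]

lemma grad_mem {z : Eu n} (hz : z ≠ 0) : gradient (sfn K) z ∈ K := by
  obtain ⟨y, hy, h⟩ := sfn_max hK.compact hK.ne z
  rw [grad_eq hK hz hy h]; exact hy

lemma inner_grad {z : Eu n} (hz : z ≠ 0) : ⟪z, gradient (sfn K) z⟫_ℝ = sfn K z := by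
  obtain ⟨y, hy, h⟩ := sfn_max hK.compact hK.ne z
  rw [grad_eq hK hz hy h]; exact h

lemma grad_smul {t : ℝ} (ht : 0 < t) {z : Eu n} (hz : z ≠ 0) :
    gradient (sfn K) (t • z) = gradient (sfn K) z := by
  apply grad_eq hK (smul_ne_zero ht.ne' hz) (grad_mem hK hz)
  rw [real_inner_smul_left, inner_grad hK hz, sfn_smul hK.compact hK.ne ht.le]

lemma hess_self {z : Eu n} (hz : z ≠ 0) : hessA K z z = 0 := by
  have h1 : HasDerivAt (fun t : ℝ => t • z) z 1 := by
    simpa using (hasDerivAt_id (1 : ℝ)).smul_const z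
  have h2 : HasFDerivAt (gradient (sfn K)) (hessA K z) ((1 : ℝ) • z) := by
    rw [one_smul]; exact grad_hasFDeriv hK hz
  have h3 := h2.comp_hasDerivAt (1 : ℝ) h1
  have h4 : HasDerivAt (fun _ : ℝ => gradient (sfn K) z) (0 : Eu n) 1 := hasDerivAt_const _ _
  have h5 : (gradient (sfn K) ∘ fun t : ℝ => t • z) =ᶠ[𝓝 1] fun _ => gradient (sfn K) z := by
    filter_upwards [lt_mem_nhds (show (0:ℝ) < 1 by norm_num)] with t ht
    exact grad_smul hK ht hz
  exact h3.unique (h4.congr_of_eventuallyEq h5)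

lemma hess_smul {t : ℝ} (ht : 0 < t) {z : Eu n} (hz : z ≠ 0) :
    t • hessA K (t • z) = hessA K z := by
  have h1 : HasFDerivAt (fun w : Eu n => t • w) (t • ContinuousLinearMap.id ℝ (Eu n)) z :=
    (hasFDerivAt_id z).const_smul t
  have h3 := (grad_hasFDeriv hK (smul_ne_zero ht.ne' hz)).comp z h1
  have h5 : (gradient (sfn K) ∘ fun w : Eu n => t • w) =ᶠ[𝓝 z] gradient (sfn K) := by
    filter_upwards [isOpen_compl_singleton.mem_nhds hz] with w hw
    exact grad_smul hK ht hw
  have := h3.unique ((grad_hasFDeriv hK hz).congr_of_eventuallyEq h5)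
  rw [← this]
  ext1 v
  simp

lemma hess_symm {z : Eu n} (hz : z ≠ 0) (v w : Eu n) :
    ⟪hessA K z v, w⟫_ℝ = ⟪hessA K z w, v⟫_ℝ := by
  have hs : IsSymmSndFDerivAt ℝ (sfn K) z :=
    (sfn_cda hK hz).isSymmSndFDerivAt (by simp; exact WithTop.coe_le_coe.2 le_top)
  have key : ∀ v w, ⟪hessA K z v, w⟫_ℝ = fderiv ℝ (fderiv ℝ (sfn K)) z v w := by
    intro v w
    have h1 : DifferentiableAt ℝ (fderiv ℝ (sfn K)) z :=
      ((sfn_cda hK hz).fderiv_right (m := (⊤ : ℕ∞)) (by simp)).differentiableAt (by simp)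
    have h2 := ((InnerProductSpace.toDual ℝ (Eu n)).symm.toContinuousLinearEquiv.toContinuousLinearMap.hasFDerivAt.comp z h1.hasFDerivAt)
    have h3 := (grad_hasFDeriv hK hz).unique h2
    rw [h3]
    simp
  rw [key, key]
  exact hs v w

lemma grad_mono {a b : Eu n} (ha : a ≠ 0) (hb : b ≠ 0) :
    0 ≤ ⟪gradient (sfn K) a - gradient (sfn K) b, a - b⟫_ℝ := by
  have h1 := le_sfn hK.compact a (grad_mem hK hb)
  have h2 := le_sfn hK.compact b (grad_mem hK ha)
  have h3 := inner_grad hK ha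
  have h4 := inner_grad hK hb
  rw [inner_sub_left, inner_sub_right, inner_sub_right]
  simp only [real_inner_comm] at *
  linarith

lemma hess_nonneg {z : Eu n} (hz : z ≠ 0) (v : Eu n) : 0 ≤ ⟪hessA K z v, v⟫_ℝ := by
  have h1 : HasDerivAt (fun t : ℝ => z + t • v) v 0 := by
    simpa using ((hasDerivAt_id (0 : ℝ)).smul_const v).const_add z
  have h2 : HasFDerivAt (gradient (sfn K)) (hessA K z) (z + (0 : ℝ) • v) := by
    rw [zero_smul, add_zero]; exact grad_hasFDeriv hK hz
  have h3 := h2.comp_hasDerivAt (0 : ℝ) h1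
  have h4 : HasDerivAt (fun t : ℝ => ⟪gradient (sfn K) (z + t • v), v⟫_ℝ) ⟪hessA K z v, v⟫_ℝ 0 := by
    have := h3.inner ℝ (hasDerivAt_const (0:ℝ) v)
    simpa using this
  have h5 := h4.tendsto_slope_zero_right
  refine ge_of_tendsto h5 ?_
  have hn : ∀ᶠ t : ℝ in 𝓝[>] 0, z + t • v ≠ 0 := by
    have : ContinuousAt (fun t : ℝ => z + t • v) 0 := by fun_prop
    have := this.eventually_ne (y := 0) (by simpa using hz)
    exact this.filter_mono nhdsWithin_le_nhds
  filter_upwards [hn, self_mem_nhdsWithin] with t ht ht0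
  have := grad_mono hK ht hz
  simp only [add_sub_cancel_left, zero_add, zero_smul, add_zero, inner_smul_right] at this ⊢
  rw [smul_eq_mul, ← inner_sub_left]
  have ht0' : 0 < t := ht0
  have := nonneg_of_mul_nonneg_right this ht0'
  positivity

end supp

/-- gradient of `h^2/2` -/
noncomputable def YY {n : ℕ} (K : Set (Eu n)) (z : Eu n) : Eu n := sfn K z • gradient (sfn K) z

/-- derivative of `YY` -/
noncomputable def DY {n : ℕ} (K : Set (Eu n)) (z : Eu n) : Eu n →L[ℝ] Eu n :=
  sfn K z • hessA K z + (innerSL ℝ (gradient (sfn K) z)).smulRight (gradient (sfn K) z)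

lemma det_rank {n : ℕ} (A : Eu n →L[ℝ] Eu n) (x X : Eu n) (h : ℝ) (hh : h ≠ 0) (hx : ‖x‖ = 1)
    (hX : ⟪x, X⟫_ℝ = h) (hA : ∀ v, ⟪x, A v⟫_ℝ = 0) (hAx : A x = 0) :
    LinearMap.det ((h • A + (innerSL ℝ X).smulRight X : Eu n →L[ℝ] Eu n) : Eu n →ₗ[ℝ] Eu n)
      = h ^ (n + 2) * LinearMap.det ((A + tens x : Eu n →L[ℝ] Eu n) : Eu n →ₗ[ℝ] Eu n) := by
  have hxx : ⟪x, x⟫_ℝ = 1 := by rw [real_inner_self_eq_norm_sq, hx]; norm_num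
  have e : ((h • A + (innerSL ℝ X).smulRight X : Eu n →L[ℝ] Eu n) : Eu n →ₗ[ℝ] Eu n) =
      (LinearMap.transvection ((innerSL ℝ x : Eu n →L[ℝ] ℝ) : Eu n →ₗ[ℝ] ℝ) (h⁻¹ • X - x)) ∘ₗ
      ((A + tens x : Eu n →L[ℝ] Eu n) : Eu n →ₗ[ℝ] Eu n) ∘ₗ (h •
        (LinearMap.transvection ((innerSL ℝ (X - x) : Eu n →L[ℝ] ℝ) : Eu n →ₗ[ℝ] ℝ) x)) := by
    ext1 v
    have h1 : ((A + tens x : Eu n →L[ℝ] Eu n)) (h • (v + ⟪X - x, v⟫_ℝ • x)) =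
        h • A v + (h * ⟪X, v⟫_ℝ) • x := by
      simp only [map_smul, map_add, tens, add_apply, hAx, zero_add,
        ContinuousLinearMap.smulRight_apply, innerSL_apply_apply, hxx, inner_sub_left, one_smul]
      module
    simp only [LinearMap.comp_apply, LinearMap.smul_apply, LinearMap.transvection.apply,
      ContinuousLinearMap.coe_coe, innerSL_apply_apply, h1]
    simp only [add_apply, smul_apply, ContinuousLinearMap.smulRight_apply,
      innerSL_apply_apply, inner_add_right, inner_smul_right, hA, hxx, mul_zero, zero_add, mul_one]
    rw [smul_sub, smul_smul]
    have : h * ⟪X, v⟫_ℝ * h⁻¹ = ⟪X, v⟫_ℝ := by field_simp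
    rw [this]
    abel
  rw [e, LinearMap.det_comp, LinearMap.det_comp, LinearMap.det_smul, LinearMap.transvection.det,
    LinearMap.transvection.det]
  simp only [ContinuousLinearMap.coe_coe, innerSL_apply_apply, inner_sub_left, inner_sub_right,
    inner_smul_right, hxx, hX, real_inner_comm x X, finrank_euclideanSpace_fin]
  rw [inv_mul_cancel₀ hh]
  ring

section dual
variable {n : ℕ} {K : Set (Eu n)} (hK : IsSmoothConvexBody K)
include hK

lemma YY_zero : YY K 0 = 0 := by simp [YY, sfn_zero hK.ne]

lemma YY_hasFDeriv {z : Eu n} (hz : z ≠ 0) : HasFDerivAt (YY K) (DY K z) z := by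
  have := (sfn_hasGrad hK hz).hasFDerivAt.smul (grad_hasFDeriv hK hz)
  refine this.congr_fderiv ?_
  ext1 v
  simp [DY]

lemma YY_smul {t : ℝ} (ht : 0 ≤ t) (z : Eu n) : YY K (t • z) = t • YY K z := by
  rcases eq_or_ne z 0 with rfl | hz
  · simp [YY_zero hK]
  rcases ht.eq_or_lt with rfl | ht
  · simp [YY_zero hK]
  · simp only [YY, grad_smul hK ht hz, sfn_smul hK.compact hK.ne ht.le, smul_smul]

lemma DY_smul {t : ℝ} (ht : 0 < t) {z : Eu n} (hz : z ≠ 0) : DY K (t • z) = DY K z := by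
  simp only [DY, grad_smul hK ht hz, sfn_smul hK.compact hK.ne ht.le, ← hess_smul hK ht hz,
    smul_smul]
  rw [mul_comm]

lemma DY_cont {z : Eu n} (hz : z ≠ 0) : ContinuousAt (DY K) z := by
  have h1 := (sfn_cda hK hz).continuousAt
  have h2 := (grad_cda hK hz).continuousAt
  have h3 := hess_cont hK hz
  have h4 : ContinuousAt (fun z => (innerSL ℝ (gradient (sfn K) z)).smulRight (gradient (sfn K) z)) z := by
    have := ((ContinuousLinearMap.smulRightL ℝ (Eu n) (Eu n)).continuous₂.continuousAt
      (x := (innerSL ℝ (gradient (sfn K) z), gradient (sfn K) z))).comp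
      (f := fun z => (innerSL ℝ (gradient (sfn K) z), gradient (sfn K) z))
      (((innerSL ℝ (E := Eu n)).continuous.continuousAt.comp h2).prodMk h2)
    exact this
  exact (h1.smul h3).add h4

lemma DY_det {x : Eu n} (hx : ‖x‖ = 1) : (DY K x).det = sfn K x ^ (n + 2) * rK K x := by
  have hx0 : x ≠ 0 := by rintro rfl; simp at hx
  refine det_rank (hessA K x) x _ _ (sfn_pos hK hx0).ne' hx (inner_grad hK hx0) (fun v => ?_)
    (hess_self hK hx0)
  rw [real_inner_comm, hess_symm hK hx0, hess_self hK hx0, inner_zero_left]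

lemma grad_bound : ∃ R, 0 < R ∧ (∀ y ∈ K, ‖y‖ ≤ R) := by
  obtain ⟨R, hR, h⟩ := hK.compact.isBounded.exists_pos_norm_le
  exact ⟨R, hR, h⟩

lemma sfn_le_norm {R : ℝ} (hR : ∀ y ∈ K, ‖y‖ ≤ R) (z : Eu n) : sfn K z ≤ R * ‖z‖ := by
  apply sfn_le hK.ne
  intro y hy
  refine (real_inner_le_norm z y).trans ?_
  rw [mul_comm]
  gcongr
  exact hR y hy

lemma sfn_lip {R : ℝ} (hR : ∀ y ∈ K, ‖y‖ ≤ R) (z w : Eu n) :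
    |sfn K z - sfn K w| ≤ R * ‖z - w‖ := by
  rw [abs_le]
  have h1 := sfn_add_le hK.compact hK.ne (z - w) w
  have h2 := sfn_add_le hK.compact hK.ne (w - z) z
  have h3 := sfn_le_norm hK hR (z - w)
  have h4 := sfn_le_norm hK hR (w - z)
  rw [norm_sub_rev] at h4
  simp only [sub_add_cancel] at h1 h2
  constructor <;> linarith

lemma sfn_cont : Continuous (sfn K) := by
  obtain ⟨R, hR0, hR⟩ := grad_bound hK
  exact (LipschitzWith.of_dist_le_mul (K := ⟨R, hR0.le⟩) fun z w => by
    rw [dist_eq_norm, dist_eq_norm]; exact sfn_lip hK hR z w).continuous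

lemma YY_norm {R : ℝ} (hR0 : 0 < R) (hR : ∀ y ∈ K, ‖y‖ ≤ R) (z : Eu n) :
    ‖YY K z‖ ≤ R ^ 2 * ‖z‖ := by
  rcases eq_or_ne z 0 with rfl | hz
  · simp [YY_zero hK]
  rw [YY, norm_smul, Real.norm_of_nonneg (sfn_pos hK hz).le]
  nlinarith [sfn_le_norm hK hR z, hR _ (grad_mem hK hz), norm_nonneg (gradient (sfn K) z),
    norm_nonneg z, mul_le_mul (sfn_le_norm hK hR z) (hR _ (grad_mem hK hz)) (norm_nonneg _)
      (by positivity)]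

lemma DY_bound : ∃ D, 0 < D ∧ ∀ z : Eu n, z ≠ 0 → ‖DY K z‖ ≤ D := by
  have hc : ContinuousOn (DY K) (sphere 0 1) := fun z hz =>
    (DY_cont hK (by rintro rfl; simp at hz)).continuousWithinAt
  obtain ⟨D, hD⟩ := (isCompact_sphere (0 : Eu n) 1).exists_bound_of_continuousOn hc
  refine ⟨max D 1, by positivity, fun z hz => ?_⟩
  have hz' : 0 < ‖z‖ := norm_pos_iff.2 hz
  rw [← DY_smul hK (inv_pos.2 hz') hz]
  refine (hD _ ?_).trans (le_max_left _ _)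
  simp [norm_smul, hz'.ne']

lemma YY_lip : ∃ Λ, 0 < Λ ∧ ∀ a b : Eu n, ‖YY K a - YY K b‖ ≤ Λ * ‖a - b‖ := by
  obtain ⟨D, hD0, hD⟩ := DY_bound hK
  obtain ⟨R, hR0, hR⟩ := grad_bound hK
  refine ⟨max D (R ^ 2), by positivity, fun a b => ?_⟩
  by_cases h0 : (0 : Eu n) ∈ segment ℝ b a
  · have hs : dist b 0 + dist 0 a = dist b a := dist_add_dist_of_mem_segment h0
    simp only [dist_eq_norm, sub_zero, zero_sub, norm_neg] at hs
    rw [norm_sub_rev a b, ← hs]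
    calc _ ≤ ‖YY K a‖ + ‖YY K b‖ := norm_sub_le _ _
      _ ≤ R ^ 2 * ‖a‖ + R ^ 2 * ‖b‖ := add_le_add (YY_norm hK hR0 hR a) (YY_norm hK hR0 hR b)
      _ = R ^ 2 * (‖b‖ + ‖a‖) := by ring
      _ ≤ _ := by gcongr; exact le_max_right _ _
  · have := (convex_segment b a).norm_image_sub_le_of_norm_hasFDerivWithin_le (f := YY K) (f' := DY K)
      (C := D) (fun x hx => (YY_hasFDeriv hK (by rintro rfl; exact h0 hx)).hasFDerivWithinAt)
      (fun x hx => hD x (by rintro rfl; exact h0 hx)) (left_mem_segment _ _ _) (right_mem_segment _ _ _)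
    refine this.trans ?_
    gcongr
    exact le_max_left _ _

lemma YY_cont : Continuous (YY K) := by
  obtain ⟨R, hR0, hR⟩ := YY_lip hK
  exact (LipschitzWith.of_dist_le_mul (K := ⟨R, hR0.le⟩) fun z w => by
    rw [dist_eq_norm, dist_eq_norm]; exact hR z w).continuous

lemma Phi_hasGrad (z : Eu n) : HasFDerivAt (fun z => sfn K z ^ 2 / 2) (innerSL ℝ (YY K z)) z := by
  rcases eq_or_ne z 0 with rfl | hz
  · obtain ⟨R, hR0, hR⟩ := grad_bound hK
    rw [YY_zero hK, map_zero, hasFDerivAt_iff_isLittleO]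
    simp only [sfn_zero hK.ne, zero_apply, sub_zero]
    have : (fun x : Eu n => sfn K x ^ 2 / 2 - 0 ^ 2 / 2) =O[𝓝 0] fun x => ‖x‖ ^ 2 := by
      refine Asymptotics.IsBigO.of_bound (R ^ 2 / 2) (.of_forall fun x => ?_)
      have h1 := sfn_lip hK hR x 0
      rw [sfn_zero hK.ne, sub_zero, sub_zero] at h1
      have h2 := pow_le_pow_left₀ (abs_nonneg _) h1 2
      rw [sq_abs, mul_pow] at h2
      simp only [norm_pow, norm_norm]
      rw [Real.norm_of_nonneg (by simp; positivity)]
      norm_num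
      linarith
    refine this.trans_isLittleO ?_
    simpa using (Asymptotics.isLittleO_norm_pow_id (E' := Eu n) one_lt_two)
  · have := ((sfn_hasGrad hK hz).hasFDerivAt.pow 2).const_mul (1/2)
    refine (this.congr_fderiv ?_).congr_of_eventuallyEq (.of_forall fun w => ?_)
    · ext1 v
      simp [YY]
      ring
    · simp only; ring

end dual

section gauge
variable {n : ℕ} {K : Set (Eu n)} (hK : IsSmoothConvexBody K) (h0 : (0 : Eu n) ∈ interior K)
include hK h0

lemma K_nhds : K ∈ 𝓝 (0 : Eu n) := mem_interior_iff_mem_nhds.1 h0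

lemma gauge_pos' {a : Eu n} (ha : a ≠ 0) : 0 < gauge K a :=
  (gauge_pos (absorbent_nhds_zero (K_nhds hK h0))
    (NormedSpace.isVonNBounded_of_isBounded ℝ hK.compact.isBounded)).2 ha

lemma gauge_mem {a : Eu n} (ha : a ≠ 0) : (gauge K a)⁻¹ • a ∈ K := by
  have h1 := gauge_pos' hK h0 ha
  have : gauge K ((gauge K a)⁻¹ • a) ≤ 1 := by
    rw [gauge_smul_of_nonneg (by positivity), smul_eq_mul, inv_mul_cancel₀ h1.ne']
  rw [gauge_le_one_iff_mem_closure hK.convex (K_nhds hK h0)] at this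
  rwa [hK.compact.isClosed.closure_eq] at this

lemma gauge_dual (a w : Eu n) : ⟪a, w⟫_ℝ ≤ gauge K a * sfn K w := by
  rcases eq_or_ne a 0 with rfl | ha
  · simp
  have := le_sfn hK.compact w (gauge_mem hK h0 ha)
  rw [inner_smul_right, inv_mul_le_iff₀ (gauge_pos' hK h0 ha)] at this
  rwa [real_inner_comm]

lemma gauge_grad {z : Eu n} (hz : z ≠ 0) : gauge K (gradient (sfn K) z) = 1 := by
  apply le_antisymm (gauge_le_one_of_mem (grad_mem hK hz))
  have := gauge_dual hK h0 (gradient (sfn K) z) z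
  rw [real_inner_comm, inner_grad hK hz] at this
  exact (le_mul_iff_one_le_left (sfn_pos hK hz)).1 this

lemma gauge_YY (z : Eu n) : gauge K (YY K z) = sfn K z := by
  rcases eq_or_ne z 0 with rfl | hz
  · simp [YY_zero hK, sfn_zero hK.ne]
  rw [YY, gauge_smul_of_nonneg (sfn_pos hK hz).le, gauge_grad hK h0 hz, smul_eq_mul, mul_one]

lemma norm_le_gauge {R : ℝ} (hR : ∀ y ∈ K, ‖y‖ ≤ R) (a : Eu n) : ‖a‖ ≤ R * gauge K a := by
  rcases eq_or_ne a 0 with rfl | ha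
  · simp
  have h1 := gauge_pos' hK h0 ha
  have := hR _ (gauge_mem hK h0 ha)
  rwa [norm_smul, norm_inv, Real.norm_of_nonneg h1.le, inv_mul_le_iff₀ h1, mul_comm] at this

lemma ball_data : ∃ δ, 0 < δ ∧ (∀ a, δ * gauge K a ≤ ‖a‖) ∧ ∀ z, δ * ‖z‖ ≤ sfn K z := by
  obtain ⟨d, hd, hb⟩ := Metric.mem_nhds_iff.1 (K_nhds hK h0)
  refine ⟨d / 2, by positivity, fun a => ?_, fun z => ?_⟩
  · have := mul_gauge_le_norm (ball_subset_ball (by linarith : d / 2 ≤ d) |>.trans hb) (x := a)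
    exact this
  · rcases eq_or_ne z 0 with rfl | hz
    · simp [sfn_zero hK.ne]
    have hz' : 0 < ‖z‖ := norm_pos_iff.2 hz
    have hm : (d / 2 / ‖z‖) • z ∈ K := hb (by
      rw [mem_ball_zero_iff, norm_smul, Real.norm_of_nonneg (by positivity)]
      rw [div_mul_cancel₀ _ hz'.ne']; linarith)
    have := le_sfn hK.compact z hm
    rw [inner_smul_right, real_inner_self_eq_norm_sq] at this
    refine le_trans (le_of_eq ?_) this
    field_simp

lemma YY_surj : Function.Surjective (YY K) := by
  intro y
  obtain ⟨δ, hδ, -, hδ'⟩ := ball_data hK h0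
  have hcont : Continuous (fun z => sfn K z ^ 2 / 2 - ⟪y, z⟫_ℝ) := by
    have := sfn_cont hK
    fun_prop
  obtain ⟨z, hz⟩ := hcont.exists_forall_le' (x₀ := 0) (by
    filter_upwards [tendsto_norm_cocompact_atTop.eventually_ge_atTop (2 * ‖y‖ / δ ^ 2)] with z hz
    simp only [sfn_zero hK.ne, inner_zero_right]
    rw [div_le_iff₀ (by positivity)] at hz
    have h1 := hδ' z
    have h2 := pow_le_pow_left₀ (by positivity) h1 2
    have h3 := real_inner_le_norm y z
    rw [mul_pow] at h2
    nlinarith [norm_nonneg z])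
  refine ⟨z, ?_⟩
  have h1 : IsLocalMin (fun w => sfn K w ^ 2 / 2 - ⟪y, w⟫_ℝ) z := .of_forall hz
  have h2 := (Phi_hasGrad hK z).sub (innerSL ℝ y).hasFDerivAt
  have h3 := h1.hasFDerivAt_eq_zero h2
  rw [← sub_eq_zero]
  refine ext_inner_right ℝ fun v => ?_
  have := congrArg (fun L => L v) h3
  simp only [sub_apply, innerSL_apply_apply, zero_apply] at this
  rw [inner_sub_left, this, inner_zero_left]

lemma YY_ne {z : Eu n} (hz : z ≠ 0) : YY K z ≠ 0 := by
  intro h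
  have := gauge_YY hK h0 z
  rw [h, gauge_zero] at this
  exact (sfn_pos hK hz).ne this

lemma YY_inj (hdet : ∀ z : Eu n, z ≠ 0 → (DY K z).det ≠ 0) : Function.Injective (YY K) := by
  intro a b hab
  by_contra hne
  have ha : a ≠ 0 := by
    rintro rfl
    rw [YY_zero hK] at hab
    exact YY_ne hK h0 (Ne.symm hne) hab.symm
  have hb : b ≠ 0 := by
    rintro rfl
    rw [YY_zero hK] at hab
    exact YY_ne hK h0 ha hab
  have hh : sfn K a = sfn K b := by rw [← gauge_YY hK h0 a, hab, gauge_YY hK h0]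
  have hX : gradient (sfn K) a = gradient (sfn K) b := by
    simp only [YY, hh] at hab
    exact smul_right_injective _ (sfn_pos hK hb).ne' hab
  set k := gradient (sfn K) b with hk
  have hka : ⟪a, k⟫_ℝ = sfn K b := by rw [← hX, inner_grad hK ha, hh]
  have hkb : ⟪b, k⟫_ℝ = sfn K b := inner_grad hK hb
  have hkm : k ∈ K := grad_mem hK hb
  have hl : ∀ t ∈ Set.Icc (0:ℝ) 1, YY K (b + t • (a - b)) = YY K b := by
    intro t ht
    have e : b + t • (a - b) = t • a + (1 - t) • b := by module
    have h1 : ⟪b + t • (a - b), k⟫_ℝ = sfn K b := by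
      rw [inner_add_left, real_inner_smul_left, inner_sub_left, hka, hkb]; ring
    have h2 : sfn K (b + t • (a - b)) = sfn K b := by
      apply le_antisymm
      · rw [e]
        refine (sfn_add_le hK.compact hK.ne _ _).trans ?_
        rw [sfn_smul hK.compact hK.ne ht.1, sfn_smul hK.compact hK.ne (by linarith [ht.2]), hh]
        linarith
      · rw [← h1]; exact le_sfn hK.compact _ hkm
    have h3 : b + t • (a - b) ≠ 0 := by
      intro h
      rw [h, sfn_zero hK.ne] at h2
      exact (sfn_pos hK hb).ne h2
    rw [YY, YY, h2, grad_eq hK h3 hkm (h1.trans h2.symm)]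
  have hder : HasDerivAt (fun t : ℝ => b + t • (a - b)) (a - b) (1/2) := by
    simpa using ((hasDerivAt_id (1/2 : ℝ)).smul_const (a - b)).const_add b
  have hm : b + (1/2 : ℝ) • (a - b) ≠ 0 := by
    intro h
    have := hl (1/2) (by norm_num)
    rw [h, YY_zero hK] at this
    exact YY_ne hK h0 hb this.symm
  have h3 := (YY_hasFDeriv hK hm).comp_hasDerivAt (1/2 : ℝ) hder
  have h5 : (YY K ∘ fun t : ℝ => b + t • (a - b)) =ᶠ[𝓝 (1/2)] fun _ => YY K b := by
    filter_upwards [Icc_mem_nhds (show (0:ℝ) < 1/2 by norm_num) (show (1/2:ℝ) < 1 by norm_num)] with t ht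
    exact hl t ht
  have h6 : DY K (b + (1/2 : ℝ) • (a - b)) (a - b) = 0 :=
    h3.unique ((hasDerivAt_const _ _).congr_of_eventuallyEq h5)
  have h7 := hdet _ hm
  have h8 := LinearMap.bot_lt_ker_of_det_eq_zero (f := ((DY K (b + (1/2 : ℝ) • (a - b)) : Eu n →L[ℝ] Eu n) : Eu n →ₗ[ℝ] Eu n))
  have h9 : Function.Injective ((DY K (b + (1/2 : ℝ) • (a - b)) : Eu n →L[ℝ] Eu n) : Eu n →ₗ[ℝ] Eu n) := by
    have := (LinearMap.isUnit_iff_ker_eq_bot _).1 ((LinearMap.isUnit_iff_isUnit_det _).2 (isUnit_iff_ne_zero.2 h7))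
    exact LinearMap.ker_eq_bot.1 this
  have : a - b = 0 := h9 (by simpa using h6)
  exact hne (sub_eq_zero.1 this)

end gauge

section var
variable {n : ℕ} {K : Set (Eu n)} (hK : IsSmoothConvexBody K)
include hK

lemma secdiff_hasDeriv (z e : Eu n) (s : ℝ) :
    HasDerivAt (fun s : ℝ => sfn K (z + s • e) ^ 2 / 2 + sfn K (z - s • e) ^ 2 / 2 - sfn K z ^ 2)
      ⟪YY K (z + s • e) - YY K (z - s • e), e⟫_ℝ s := by
  have h1 : HasDerivAt (fun s : ℝ => z + s • e) e s := by
    simpa using ((hasDerivAt_id s).smul_const e).const_add z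
  have h2 : HasDerivAt (fun s : ℝ => z - s • e) (-e) s := by
    simpa using ((hasDerivAt_id s).smul_const e).const_sub z
  have h3 := (Phi_hasGrad hK (z + s • e)).comp_hasDerivAt s h1
  have h4 := (Phi_hasGrad hK (z - s • e)).comp_hasDerivAt s h2
  have h5 := (h3.add h4).sub_const (sfn K z ^ 2)
  refine h5.congr_deriv ?_
  rw [inner_sub_left, map_neg, innerSL_apply_apply, innerSL_apply_apply]
  ring

lemma secdiff_bound {Λ : ℝ} (hΛ : ∀ a b : Eu n, ‖YY K a - YY K b‖ ≤ Λ * ‖a - b‖) (hΛ0 : 0 < Λ)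
    (z e : Eu n) {s : ℝ} (hs : 0 < s) :
    |sfn K (z + s • e) ^ 2 / 2 + sfn K (z - s • e) ^ 2 / 2 - sfn K z ^ 2| ≤
      2 * Λ * ‖e‖ ^ 2 * s ^ 2 := by
  have key := (convex_Icc (0:ℝ) s).norm_image_sub_le_of_norm_hasDerivWithin_le
    (C := 2 * Λ * ‖e‖ ^ 2 * s)
    (fun t _ => (secdiff_hasDeriv hK z e t).hasDerivWithinAt) (fun t ht => by
      refine (norm_inner_le_norm _ _).trans ?_
      have h1 := hΛ (z + t • e) (z - t • e)
      have h2 : z + t • e - (z - t • e) = (2 * t) • e := by module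
      rw [h2, norm_smul, Real.norm_of_nonneg (by linarith [ht.1])] at h1
      calc _ ≤ (Λ * (2 * t * ‖e‖)) * ‖e‖ := by gcongr
        _ ≤ (Λ * (2 * s * ‖e‖)) * ‖e‖ := by gcongr; exact ht.2
        _ = _ := by ring) (Set.left_mem_Icc.2 hs.le) (Set.right_mem_Icc.2 hs.le)
  simp only [zero_smul, add_zero, sub_zero] at key
  rw [Real.norm_eq_abs, Real.norm_of_nonneg hs.le] at key
  have e1 : sfn K z ^ 2 / 2 + sfn K z ^ 2 / 2 - sfn K z ^ 2 = 0 := by ring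
  rw [e1, sub_zero] at key
  refine key.trans (le_of_eq ?_)
  ring

lemma secdiff_lim {z : Eu n} (hz : z ≠ 0) (e : Eu n) :
    Filter.Tendsto (fun s : ℝ => (sfn K (z + s • e) ^ 2 / 2 + sfn K (z - s • e) ^ 2 / 2 - sfn K z ^ 2)
      / s ^ 2) (𝓝[>] 0) (𝓝 ⟪DY K z e, e⟫_ℝ) := by
  refine HasDerivAt.lhopital_zero_nhdsGT (f' := fun s => ⟪YY K (z + s • e) - YY K (z - s • e), e⟫_ℝ)
    (g' := fun s => 2 * s) (.of_forall fun s => secdiff_hasDeriv hK z e s)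
    (.of_forall fun s => by simpa using hasDerivAt_pow 2 s) ?_ ?_ ?_ ?_
  · filter_upwards [self_mem_nhdsWithin] with s hs
    have : (0:ℝ) < s := hs
    positivity
  · have : ContinuousAt (fun s : ℝ => sfn K (z + s • e) ^ 2 / 2 + sfn K (z - s • e) ^ 2 / 2 - sfn K z ^ 2) 0 :=
      (secdiff_hasDeriv hK z e 0).continuousAt
    have h2 := this.tendsto.mono_left (nhdsWithin_le_nhds (s := Set.Ioi 0))
    convert h2 using 2
    simp
  · have : ContinuousAt (fun s : ℝ => s ^ 2) 0 := by fun_prop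
    have h2 := this.tendsto.mono_left (nhdsWithin_le_nhds (s := Set.Ioi 0))
    simpa using h2
  · have h1 : HasDerivAt (fun s : ℝ => z + s • e) e 0 := by
      simpa using ((hasDerivAt_id (0:ℝ)).smul_const e).const_add z
    have h2 : HasDerivAt (fun s : ℝ => z - s • e) (-e) 0 := by
      simpa using ((hasDerivAt_id (0:ℝ)).smul_const e).const_sub z
    have h3 := (show HasFDerivAt (YY K) (DY K z) (z + (0:ℝ) • e) by
      simpa using YY_hasFDeriv hK hz).comp_hasDerivAt (0:ℝ) h1
    have h4 := (show HasFDerivAt (YY K) (DY K z) (z - (0:ℝ) • e) by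
      simpa using YY_hasFDeriv hK hz).comp_hasDerivAt (0:ℝ) h2
    have h5 := ((h3.sub h4).inner ℝ (hasDerivAt_const (0:ℝ) e)).tendsto_slope_zero_right
    have h6 := h5.div_const 2
    have e1 : ⟪DY K z e, e⟫_ℝ = (⟪(YY K ∘ fun s : ℝ => z + s • e) 0 - (YY K ∘ fun s : ℝ => z - s • e) 0, 0⟫_ℝ
        + ⟪DY K z e - DY K z (-e), e⟫_ℝ) / 2 := by
      simp [inner_add_left]
    rw [e1]
    refine h6.congr' ?_
    filter_upwards [self_mem_nhdsWithin] with s hs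
    have : (0:ℝ) < s := hs
    simp
    field_simp

lemma sfndiff_lim {z : Eu n} (hz : z ≠ 0) (e : Eu n) :
    Filter.Tendsto (fun s : ℝ => (sfn K (z + s • e) - sfn K (z - s • e)) / s) (𝓝[>] 0)
      (𝓝 (2 * ⟪gradient (sfn K) z, e⟫_ℝ)) := by
  have h1 : HasDerivAt (fun s : ℝ => z + s • e) e 0 := by
    simpa using ((hasDerivAt_id (0:ℝ)).smul_const e).const_add z
  have h2 : HasDerivAt (fun s : ℝ => z - s • e) (-e) 0 := by
    simpa using ((hasDerivAt_id (0:ℝ)).smul_const e).const_sub z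
  have h3 := (show HasGradientAt (sfn K) (gradient (sfn K) z) (z + (0:ℝ) • e) by
    simpa using sfn_hasGrad hK hz).hasFDerivAt.comp_hasDerivAt (0:ℝ) h1
  have h4 := (show HasGradientAt (sfn K) (gradient (sfn K) z) (z - (0:ℝ) • e) by
    simpa using sfn_hasGrad hK hz).hasFDerivAt.comp_hasDerivAt (0:ℝ) h2
  have h5 := (h3.sub h4).tendsto_slope_zero_right
  have e1 : 2 * ⟪gradient (sfn K) z, e⟫_ℝ = InnerProductSpace.toDual ℝ (Eu n) (gradient (sfn K) z) e -
      InnerProductSpace.toDual ℝ (Eu n) (gradient (sfn K) z) (-e) := by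
    rw [map_neg, InnerProductSpace.toDual_apply_apply]; ring
  rw [e1]
  refine h5.congr' ?_
  filter_upwards with s
  simp [div_eq_inv_mul]

variable (h0 : (0 : Eu n) ∈ interior K) (hdet : ∀ z : Eu n, z ≠ 0 → (DY K z).det ≠ 0)
include h0 hdet

lemma change_var (g : Eu n → ℝ) : ∫ y, g y = ∫ z, |(DY K z).det| * g (YY K z) := by
  have himg : YY K '' {(0 : Eu n)}ᶜ = {(0 : Eu n)}ᶜ := by
    rw [Set.image_compl_eq ⟨YY_inj hK h0 hdet, YY_surj hK h0⟩, Set.image_singleton, YY_zero hK]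
  have h1 := integral_image_eq_integral_abs_det_fderiv_smul volume (s := {(0 : Eu n)}ᶜ)
    (f := YY K) (f' := DY K) (measurableSet_singleton _).compl
    (fun x hx => (YY_hasFDeriv hK hx).hasFDerivWithinAt) (YY_inj hK h0 hdet).injOn g
  have h2 : (volume : Measure (Eu n)).restrict {(0 : Eu n)}ᶜ = volume :=
    Measure.restrict_eq_self_of_ae_mem (by simp [ae_iff])
  rw [himg, h2] at h1
  simpa using h1

lemma var_z (e : Eu n) (c : ℝ)
    (hmean : ∫ z, |(DY K z).det| * ((⟪YY K z, e⟫_ℝ - c * sfn K z) * Real.exp (-(sfn K z ^ 2 / 2))) = 0) :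
    ∫ z, |(DY K z).det| * ((⟪YY K z, e⟫_ℝ - c * sfn K z) ^ 2 * Real.exp (-(sfn K z ^ 2 / 2))) ≤
    ∫ z, |(DY K z).det| * ((sfn K z * ⟪hessA K z e, e⟫_ℝ + (⟪gradient (sfn K) z, e⟫_ℝ - c) ^ 2)
      * Real.exp (-(sfn K z ^ 2 / 2))) := by
  obtain ⟨R, hR0, hR⟩ := grad_bound hK
  obtain ⟨Λ, hΛ0, hΛ⟩ := YY_lip hK
  obtain ⟨δ, hδ, hδ1, hδ2⟩ := ball_data hK h0
  have inj := YY_inj hK h0 hdet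
  have hemb : MeasurableEmbedding (YY K) := (YY_cont hK).measurableEmbedding inj
  set ζ := Function.surjInv (YY_surj hK h0) with hζ
  have ζr : ∀ y, YY K (ζ y) = y := Function.surjInv_eq _
  have ζl : ∀ z, ζ (YY K z) = z := fun z => inj (ζr _)
  have ζm : Measurable ζ := by
    intro S hS
    have : ζ ⁻¹' S = YY K '' S := by
      ext y
      constructor
      · intro hy; exact ⟨ζ y, hy, ζr y⟩
      · rintro ⟨z, hz, rfl⟩; simpa [ζl] using hz
    rw [this]
    exact hemb.measurableSet_image.2 hS
  set Q : ℝ → Eu n → ℝ := fun s z => (sfn K (z + s • e) ^ 2 / 2 + sfn K (z - s • e) ^ 2 / 2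
    - sfn K z ^ 2) / s ^ 2 - c * ((sfn K (z + s • e) - sfn K (z - s • e)) / s) + c ^ 2 with hQ
  have sc := sfn_cont hK
  have Qm : ∀ s, Measurable (Q s) := by
    intro s
    apply Continuous.measurable
    rw [hQ]
    fun_prop
  have gc : Continuous (gauge K) := continuous_gauge hK.convex (K_nhds hK h0)
  have gn : ∀ y, 0 ≤ gauge K y := gauge_nonneg
  set C := max (2 * Λ * ‖e‖ ^ 2 + |c| * (2 * R * ‖e‖) + c ^ 2) (‖e‖ + |c| / δ) with hC
  have main := var_of_pl (n + 1) (fun y => gauge K y ^ 2 / 2) (fun y => ⟪y, e⟫_ℝ - c * gauge K y)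
    (by fun_prop) (by fun_prop) (fun k y => Q (1 / ((k:ℝ) + 1)) (ζ y))
    (fun y => sfn K (ζ y) * ⟪hessA K (ζ y) e, e⟫_ℝ + (⟪gradient (sfn K) (ζ y), e⟫_ℝ - c) ^ 2)
    (1 / (2 * R ^ 2)) C (by positivity) (le_max_of_le_left (by positivity)) (fun y => by
      have h1 := norm_le_gauge hK h0 hR y
      have h2 := pow_le_pow_left₀ (norm_nonneg _) h1 2
      rw [one_div_mul_eq_div, div_le_iff₀ (by positivity)]
      nlinarith) (fun y => by
      refine (abs_sub _ _).trans ?_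
      have h1 : |⟪y, e⟫_ℝ| ≤ ‖y‖ * ‖e‖ := abs_real_inner_le_norm y e
      have h2 : gauge K y ≤ ‖y‖ / δ := by
        rw [le_div_iff₀ hδ, mul_comm]; exact hδ1 y
      rw [abs_mul, abs_of_nonneg (gn y)]
      calc _ ≤ ‖y‖ * ‖e‖ + |c| * (‖y‖ / δ) := by gcongr
        _ = (‖e‖ + |c| / δ) * ‖y‖ := by ring
        _ ≤ _ := by gcongr; exact le_max_right _ _) (fun k => (Qm _).comp ζm) (fun k y => by
      refine le_trans ?_ (le_max_left _ _)
      have hs : (0:ℝ) < 1 / ((k:ℝ) + 1) := by positivity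
      generalize 1 / ((k:ℝ) + 1) = s at hs
      rw [hQ]
      simp only
      have b1 := secdiff_bound hK hΛ hΛ0 (ζ y) e hs
      have b2 := sfn_lip hK hR (ζ y + s • e) (ζ y - s • e)
      have h2 : ζ y + s • e - (ζ y - s • e) = (2 * s) • e := by module
      rw [h2, norm_smul, Real.norm_of_nonneg (by positivity)] at b2
      refine (abs_add_le _ _).trans ?_
      refine add_le_add ((abs_sub _ _).trans (add_le_add ?_ ?_)) (by rw [abs_of_nonneg (sq_nonneg c)])
      · rw [abs_div, abs_of_pos (by positivity : 0 < s ^ 2), div_le_iff₀ (by positivity)]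
        exact b1
      · rw [abs_mul, abs_div, abs_of_pos hs]
        gcongr
        rw [div_le_iff₀ hs]
        linarith)
    (by
      have : ∀ᵐ y : Eu n, y ≠ 0 := by simp [ae_iff]
      filter_upwards [this] with y hy
      have hz : ζ y ≠ 0 := by
        intro h
        have := ζr y
        rw [h, YY_zero hK] at this
        exact hy this.symm
      have hs : Filter.Tendsto (fun k : ℕ => 1 / ((k : ℝ) + 1)) Filter.atTop (𝓝[>] 0) := by
        refine tendsto_nhdsWithin_iff.2 ⟨tendsto_one_div_add_atTop_nhds_zero_nat, .of_forall fun k => ?_⟩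
        show (0:ℝ) < 1 / ((k:ℝ) + 1)
        positivity
      have l1 := ((secdiff_lim hK hz e).sub ((sfndiff_lim hK hz e).const_mul c)).add_const (c ^ 2)
      have l2 := l1.comp hs
      have e1 : sfn K (ζ y) * ⟪hessA K (ζ y) e, e⟫_ℝ + (⟪gradient (sfn K) (ζ y), e⟫_ℝ - c) ^ 2 =
        ⟪DY K (ζ y) e, e⟫_ℝ - c * (2 * ⟪gradient (sfn K) (ζ y), e⟫_ℝ) + c ^ 2 := by
        simp only [DY, add_apply, smul_apply, ContinuousLinearMap.smulRight_apply,
          innerSL_apply_apply, inner_add_left, real_inner_smul_left]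
        ring
      rw [e1]
      exact l2)
    (by
      intro k a b
      have hs : (0:ℝ) < 1 / ((k:ℝ) + 1) := by positivity
      generalize 1 / ((k:ℝ) + 1) = s at hs
      set m := (1/2 : ℝ) • (a + b) with hm
      set z := ζ m with hz
      have hYz : YY K z = m := ζr m
      have g1 : gauge K m = sfn K z := by rw [← hYz, gauge_YY hK h0]
      have d1 := gauge_dual hK h0 a (z + s • e)
      have d2 := gauge_dual hK h0 b (z - s • e)
      have e2 : ⟪a, z⟫_ℝ + ⟪b, z⟫_ℝ = 2 * sfn K z ^ 2 := by
        rw [← inner_add_left]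
        have : a + b = (2 : ℝ) • m := by rw [hm, smul_smul]; norm_num
        rw [this, real_inner_smul_left, ← hYz]
        rcases eq_or_ne z 0 with h | h
        · simp [h, sfn_zero hK.ne]
        · rw [YY, real_inner_smul_left, real_inner_comm, inner_grad hK h]; ring
      have e3 : s ^ 2 * Q s z = sfn K (z + s • e) ^ 2 / 2 + sfn K (z - s • e) ^ 2 / 2
          - sfn K z ^ 2 - s * c * (sfn K (z + s • e) - sfn K (z - s • e)) + s ^ 2 * c ^ 2 := by
        rw [hQ]; field_simp
      rw [e3, g1]
      rw [inner_add_right, inner_smul_right] at d1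
      rw [inner_sub_right, inner_smul_right] at d2
      nlinarith [sq_nonneg (gauge K a + s * c - sfn K (z + s • e)),
        sq_nonneg (gauge K b - s * c - sfn K (z - s • e))])
    (by
      rw [change_var hK h0 hdet]
      simp only [gauge_YY hK h0]
      exact hmean)
  have fin := main.2.2.2
  have c1 := change_var hK h0 hdet
    (fun y => (⟪y, e⟫_ℝ - c * gauge K y) ^ 2 * Real.exp (-(gauge K y ^ 2 / 2)))
  have c2 := change_var hK h0 hdet (fun y => (sfn K (ζ y) * ⟪hessA K (ζ y) e, e⟫_ℝ +
    (⟪gradient (sfn K) (ζ y), e⟫_ℝ - c) ^ 2) * Real.exp (-(gauge K y ^ 2 / 2)))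
  simp only [gauge_YY hK h0, ζl] at c1 c2
  rw [← c1, ← c2]
  exact fin

end var

/-- radial Gaussian moments -/
noncomputable def JJ (m : ℕ) : ℝ := ∫ ρ in Set.Ioi (0:ℝ), ρ ^ m * Real.exp (-(ρ ^ 2 / 2))

lemma JJ_int (m : ℕ) {a : ℝ} (ha : 0 < a) :
    IntegrableOn (fun ρ : ℝ => ρ ^ m * Real.exp (-(a * ρ ^ 2 / 2))) (Set.Ioi 0) := by
  have := integrableOn_rpow_mul_exp_neg_mul_rpow (p := 2) (s := m) (b := a / 2)
    (by linarith [(Nat.cast_nonneg m : (0:ℝ) ≤ m)]) two_pos (by positivity)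
  refine this.congr_fun (fun x hx => ?_) measurableSet_Ioi
  simp only [Real.rpow_natCast, Real.rpow_two]
  congr 2
  ring

lemma JJ_eq (m : ℕ) : JJ m = (1/2 : ℝ) ^ (-((m:ℝ) + 1) / 2) * (1 / 2) * Real.Gamma (((m:ℝ) + 1) / 2) := by
  have := integral_rpow_mul_exp_neg_mul_rpow (p := 2) (q := m) (b := 1 / 2) two_pos
    (by linarith [(Nat.cast_nonneg m : (0:ℝ) ≤ m)]) (by positivity)
  rw [← this, JJ]
  refine setIntegral_congr_fun measurableSet_Ioi fun x hx => ?_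
  simp only [Real.rpow_natCast, Real.rpow_two]
  congr 2
  ring

lemma JJ_pos (m : ℕ) : 0 < JJ m := by
  rw [JJ_eq]
  have := Real.Gamma_pos_of_pos (s := ((m:ℝ) + 1) / 2) (by positivity)
  positivity

lemma JJ_rec (m : ℕ) : JJ (m + 2) = (m + 1) * JJ m := by
  rw [JJ_eq, JJ_eq]
  have h1 : ((((m + 2 : ℕ) : ℝ)) + 1) / 2 = ((m:ℝ) + 1) / 2 + 1 := by push_cast; ring
  have h2 : -((((m + 2 : ℕ) : ℝ)) + 1) / 2 = -((m:ℝ) + 1) / 2 + (-1) := by push_cast; ring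
  rw [h1, h2, Real.Gamma_add_one (by positivity), Real.rpow_add (by norm_num), Real.rpow_neg_one]
  ring

lemma JJ_scale (m : ℕ) {b : ℝ} (hb : 0 < b) :
    ∫ ρ in Set.Ioi (0:ℝ), ρ ^ m * Real.exp (-((ρ * b) ^ 2 / 2)) = JJ m / b ^ (m + 1) := by
  have := integral_comp_mul_left_Ioi (fun y : ℝ => y ^ m * Real.exp (-(y ^ 2 / 2))) 0 hb
  rw [mul_zero, smul_eq_mul] at this
  change _ = b⁻¹ * JJ m at this
  have h2 : ∫ ρ in Set.Ioi (0:ℝ), (b * ρ) ^ m * Real.exp (-((b * ρ) ^ 2 / 2)) =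
      b ^ m * ∫ ρ in Set.Ioi (0:ℝ), ρ ^ m * Real.exp (-((ρ * b) ^ 2 / 2)) := by
    rw [← integral_const_mul]
    congr 1; ext ρ
    rw [mul_comm b ρ]; ring
  rw [h2] at this
  rw [eq_div_iff (by positivity), pow_succ]
  calc _ = (b ^ m * ∫ ρ in Set.Ioi (0:ℝ), ρ ^ m * Real.exp (-((ρ * b) ^ 2 / 2))) * b := by ring
    _ = _ := by rw [this]; field_simp

lemma finrank_Eu (n : ℕ) : Module.finrank ℝ (Eu n) = n + 1 := by simp

lemma polar0 {n : ℕ} {G : Eu n → ℝ} (hG : Integrable G) :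
    ∫ z, G z = ∫ x : Sph n, (∫ ρ in Set.Ioi (0:ℝ), ρ ^ n * G (ρ • (x : Eu n))) ∂sphMeas n := by
  have e0 : ∫ z, G z = ∫ x : ({(0 : Eu n)}ᶜ : Set (Eu n)), G x.1 ∂((volume : Measure (Eu n)).comap (↑)) := by
    rw [integral_subtype_comap (measurableSet_singleton _).compl fun x ↦ G x,
        restrict_compl_singleton]
  have hG' : Integrable (fun x : ({(0 : Eu n)}ᶜ : Set (Eu n)) => G x.1) ((volume : Measure (Eu n)).comap (↑)) := by
    have := (integrableOn_iff_comap_subtypeVal (μ := (volume : Measure (Eu n))) (f := G)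
      (measurableSet_singleton (0 : Eu n)).compl).1 hG.integrableOn
    exact this
  have mp := (volume : Measure (Eu n)).measurePreserving_homeomorphUnitSphereProd
  set g : Sph n × Set.Ioi (0:ℝ) → ℝ := fun p => G (p.2.1 • (p.1 : Eu n)) with hg
  have e1 : ∀ x : ({(0 : Eu n)}ᶜ : Set (Eu n)), g (homeomorphUnitSphereProd (Eu n) x) = G x.1 := by
    intro x
    have hx : ‖x.1‖ ≠ 0 := norm_ne_zero_iff.2 x.2
    simp [hg, smul_smul, hx]
  have e2 := mp.integral_comp (Homeomorph.measurableEmbedding _) g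
  have i2 := mp.integrable_comp_emb (Homeomorph.measurableEmbedding _) (g := g)
  simp only [e1, Function.comp_def] at e2 i2
  rw [e0, e2, integral_prod _ (i2.1 hG')]
  refine integral_congr_ae (.of_forall fun x => ?_)
  simp only [hg, Measure.volumeIoiPow, ENNReal.ofReal]
  rw [integral_withDensity_eq_integral_smul,
    integral_subtype_comap measurableSet_Ioi fun a ↦ Real.toNNReal (a ^ (Module.finrank ℝ (Eu n) - 1)) •
      G (a • (x : Eu n)),
    setIntegral_congr_fun measurableSet_Ioi fun x hx ↦ ?_]
  · rw [NNReal.smul_def, Real.coe_toNNReal _ (pow_nonneg hx.out.le _), finrank_Eu, smul_eq_mul]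
    simp
  · exact (measurable_subtype_coe.pow_const _).real_toNNReal

lemma polarH {n : ℕ} (F b : Eu n → ℝ) (k : ℕ) (hF : ContinuousOn F {0}ᶜ) (hb : ContinuousOn b {0}ᶜ)
    (hFk : ∀ x : Eu n, x ≠ 0 → ∀ ρ : ℝ, 0 < ρ → F (ρ • x) = ρ ^ k * F x)
    (hb1 : ∀ x : Eu n, x ≠ 0 → ∀ ρ : ℝ, 0 < ρ → b (ρ • x) = ρ * b x)
    (hbpos : ∀ x : Eu n, x ≠ 0 → 0 < b x) :
    Integrable (fun z => F z * Real.exp (-(b z ^ 2 / 2))) ∧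
    ∫ z, F z * Real.exp (-(b z ^ 2 / 2)) = JJ (n + k) * ∫ x : Sph n, F x / b x ^ (n + k + 1) ∂sphMeas n := by
  have hs : sphere (0 : Eu n) 1 ⊆ {0}ᶜ := by
    rintro x hx rfl; simp at hx
  have hsx : ∀ x : Sph n, (x : Eu n) ≠ 0 := fun x => hs x.2
  obtain ⟨CF, hCF⟩ := (isCompact_sphere (0 : Eu n) 1).exists_bound_of_continuousOn (hF.mono hs)
  have hne : (sphere (0 : Eu n) 1).Nonempty := NormedSpace.sphere_nonempty.2 zero_le_one
  obtain ⟨x0, hx0, hmin⟩ := (isCompact_sphere (0 : Eu n) 1).exists_isMinOn hne (hb.mono hs)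
  have hδ : 0 < b x0 := hbpos _ (hs hx0)
  have nb : ∀ z : Eu n, z ≠ 0 → ‖z‖⁻¹ • z ∈ sphere (0 : Eu n) 1 := by
    intro z hz
    have := norm_ne_zero_iff.2 hz
    simp [norm_smul, this]
  have hzz : ∀ z : Eu n, z ≠ 0 → z = ‖z‖ • (‖z‖⁻¹ • z) := by
    intro z hz
    have := norm_ne_zero_iff.2 hz
    simp [smul_smul, this]
  have hIntF : Integrable (fun z => F z * Real.exp (-(b z ^ 2 / 2))) := by
    have hI : Integrable (fun z : Eu n => CF * (‖z‖ ^ k * Real.exp (-(b x0 ^ 2 * ‖z‖ ^ 2 / 2)))) := by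
      refine Integrable.const_mul ?_ CF
      have := (integrable_fun_norm_addHaar (volume : Measure (Eu n))
        (f := fun y : ℝ => y ^ k * Real.exp (-(b x0 ^ 2 * y ^ 2 / 2)))).2 (by
          have := JJ_int (n + k) (a := b x0 ^ 2) (by positivity)
          refine this.congr_fun (fun x hx => ?_) measurableSet_Ioi
          simp only [finrank_Eu, smul_eq_mul, Nat.add_sub_cancel]
          ring)
      exact this
    refine hI.mono' ?_ ?_
    · rw [← restrict_compl_singleton (μ := (volume : Measure (Eu n))) 0]
      refine ContinuousOn.aestronglyMeasurable ?_ (measurableSet_singleton _).compl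
      exact hF.mul (Real.continuous_exp.comp_continuousOn ((hb.pow 2).div_const 2).neg)
    · have : ∀ᵐ y : Eu n, y ≠ 0 := by simp [ae_iff]
      filter_upwards [this] with z hz
      have hz' : 0 < ‖z‖ := norm_pos_iff.2 hz
      have hu := nb z hz
      have e1 : F z = ‖z‖ ^ k * F (‖z‖⁻¹ • z) := by
        conv_lhs => rw [hzz z hz]
        exact hFk _ (hs hu) _ hz'
      have e2 : b z = ‖z‖ * b (‖z‖⁻¹ • z) := by
        conv_lhs => rw [hzz z hz]
        exact hb1 _ (hs hu) _ hz'
      have e3 : b x0 ≤ b (‖z‖⁻¹ • z) := hmin hu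
      have e4 := hCF _ hu
      rw [norm_mul, Real.norm_of_nonneg (Real.exp_pos _).le, e1, norm_mul,
        Real.norm_of_nonneg (by positivity)]
      have e5 : b x0 ^ 2 * ‖z‖ ^ 2 ≤ b z ^ 2 := by
        rw [e2, mul_pow, mul_comm]
        gcongr
      have hCF0 : 0 ≤ CF := (norm_nonneg _).trans e4
      calc _ ≤ (‖z‖ ^ k * CF) * Real.exp (-(b x0 ^ 2 * ‖z‖ ^ 2 / 2)) := by gcongr
        _ = _ := by ring
  refine ⟨hIntF, ?_⟩
  rw [polar0 hIntF, ← integral_const_mul]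
  refine integral_congr_ae (.of_forall fun x => ?_)
  simp only
  have e : ∀ ρ ∈ Set.Ioi (0:ℝ), ρ ^ n * (F (ρ • (x : Eu n)) * Real.exp (-(b (ρ • (x : Eu n)) ^ 2 / 2)))
      = F x * (ρ ^ (n + k) * Real.exp (-((ρ * b x) ^ 2 / 2))) := by
    intro ρ hρ
    rw [hFk _ (hsx x) ρ hρ, hb1 _ (hsx x) ρ hρ]
    ring
  rw [setIntegral_congr_fun measurableSet_Ioi e, integral_const_mul, JJ_scale _ (hbpos _ (hsx x))]
  ring

instance sphFin (n : ℕ) : IsFiniteMeasure (sphMeas n) := by unfold sphMeas; infer_instance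

lemma sph_ne {n : ℕ} (x : Sph n) : (x : Eu n) ≠ 0 := by
  intro h
  have := x.2
  rw [h] at this
  simp at this

lemma sph_norm {n : ℕ} (x : Sph n) : ‖(x : Eu n)‖ = 1 := by simp

lemma sph_cont {n : ℕ} {F : Type*} [TopologicalSpace F] {f : Eu n → F} (hf : ContinuousOn f {0}ᶜ) :
    Continuous (fun x : Sph n => f x) :=
  hf.comp_continuous continuous_subtype_val fun x => sph_ne x

lemma sph_int {n : ℕ} {F : Type*} [NormedAddCommGroup F] {f : Sph n → F}
    (hf : Continuous f) : Integrable f (sphMeas n) :=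
  hf.integrable_of_hasCompactSupport (HasCompactSupport.of_compactSpace f)

lemma sph_int' {n : ℕ} {F : Type*} [NormedAddCommGroup F] {f : Eu n → F}
    (hf : ContinuousOn f {0}ᶜ) : Integrable (fun x : Sph n => f x) (sphMeas n) :=
  sph_int (sph_cont hf)

section var
variable {n : ℕ} {K : Set (Eu n)} (hK : IsSmoothConvexBody K)
include hK

lemma sfn_co : ContinuousOn (sfn K) {0}ᶜ := (sfn_cont hK).continuousOn
lemma grad_co : ContinuousOn (gradient (sfn K)) {0}ᶜ := fun _ hz =>
  (grad_cda hK hz).continuousAt.continuousWithinAt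
lemma hess_co : ContinuousOn (hessA K) {0}ᶜ := fun _ hz => (hess_cont hK hz).continuousWithinAt
lemma DY_co : ContinuousOn (fun z => (DY K z).det) {0}ᶜ := fun _ hz =>
  (ContinuousLinearMap.continuous_det.continuousAt.comp (DY_cont hK hz)).continuousWithinAt

lemma dens_eq (x : Sph n) : dens K x = (DY K x).det / sfn K x ^ (n + 1) := by
  rw [DY_det hK (sph_norm x), dens, eq_div_iff (pow_pos (sfn_pos hK (sph_ne x)) _).ne']
  ring

lemma dens_cont : Continuous (fun x : Sph n => dens K x) := by
  simp only [dens_eq hK]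
  exact (sph_cont (DY_co hK)).div ((sph_cont (sfn_co hK)).pow _)
    fun x => (pow_pos (sfn_pos hK (sph_ne x)) _).ne'

variable (hd : ∀ x : Sph n, 0 < dens K x)
include hd

lemma det_pos (z : Eu n) (hz : z ≠ 0) : 0 < (DY K z).det := by
  have hz' : 0 < ‖z‖ := norm_pos_iff.2 hz
  rw [← DY_smul hK (inv_pos.2 hz') hz]
  have := hd ⟨‖z‖⁻¹ • z, by simp [norm_smul, hz'.ne']⟩
  rw [dens_eq hK] at this
  exact (div_pos_iff_of_pos_right (pow_pos (sfn_pos hK (sph_ne _)) _)).1 this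

lemma dens_int_pos : 0 < ∫ x : Sph n, dens K x ∂sphMeas n := by
  rw [integral_pos_iff_support_of_nonneg (fun x => (hd x).le) (sph_int (dens_cont hK))]
  have : Function.support (fun x : Sph n => dens K x) = Set.univ := by
    ext x; simp [(hd x).ne']
  rw [this, sphMeas, Measure.measure_univ_pos]
  exact Measure.toSphere_ne_zero _

lemma mean_zero (e : Eu n) :
    ∫ x : Sph n, dens K x * (⟪gradient (sfn K) x, e⟫_ℝ - ⟪cK K, e⟫_ℝ) ∂sphMeas n = 0 := by
  have hX := sph_cont (grad_co hK)
  have hD := dens_cont hK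
  have i1 : Integrable (fun x : Sph n => dens K x • gradient (sfn K) x) (sphMeas n) :=
    sph_int (hD.smul hX)
  have i2 : Integrable (fun x : Sph n => dens K x * ⟪gradient (sfn K) x, e⟫_ℝ) (sphMeas n) :=
    sph_int (by fun_prop)
  have i3 : Integrable (fun x : Sph n => dens K x * ⟪cK K, e⟫_ℝ) (sphMeas n) := sph_int (by fun_prop)
  simp only [mul_sub]
  rw [integral_sub i2 i3, integral_mul_const]
  have e1 : ∫ x : Sph n, dens K x * ⟪gradient (sfn K) x, e⟫_ℝ ∂sphMeas n =
      ⟪∫ x : Sph n, dens K x • gradient (sfn K) x ∂sphMeas n, e⟫_ℝ := by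
    rw [real_inner_comm, ← integral_inner i1]
    congr 1; ext x
    rw [inner_smul_right, real_inner_comm]
  rw [e1, cK, real_inner_smul_left, ← mul_assoc, mul_inv_cancel₀ (dens_int_pos hK hd).ne', one_mul, sub_self]

lemma sphVar (h0 : (0 : Eu n) ∈ interior K) (e : Eu n) :
    n * ∫ x : Sph n, dens K x * (⟪gradient (sfn K) x, e⟫_ℝ - ⟪cK K, e⟫_ℝ) ^ 2 ∂sphMeas n ≤
    ∫ x : Sph n, dens K x * (sfn K x * ⟪hessA K x e, e⟫_ℝ) ∂sphMeas n := by
  set c := ⟪cK K, e⟫_ℝ with hc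
  have hdet := fun z hz => (det_pos hK hd z hz).ne'
  have cs := sfn_co hK
  have cX := grad_co hK
  have cA := hess_co hK
  have cD := (DY_co hK).abs
  have cY : ContinuousOn (YY K) {0}ᶜ := (YY_cont hK).continuousOn
  have b1 : ∀ x : Eu n, x ≠ 0 → ∀ ρ : ℝ, 0 < ρ → sfn K (ρ • x) = ρ * sfn K x :=
    fun x _ ρ hρ => sfn_smul hK.compact hK.ne hρ.le x
  have hpow : ∀ x : Sph n, ∀ m, sfn K x ^ m ≠ 0 := fun x m => (pow_pos (sfn_pos hK (sph_ne _)) _).ne'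
  have hdd : ∀ x : Sph n, |(DY K x).det| = dens K x * sfn K x ^ (n + 1) := by
    intro x
    rw [abs_of_pos (det_pos hK hd _ (sph_ne x)), dens_eq hK, div_mul_cancel₀ _ (hpow x _)]
  have hY : ∀ x : Sph n, ⟪YY K x, e⟫_ℝ = sfn K x * ⟪gradient (sfn K) x, e⟫_ℝ := by
    intro x; rw [YY, real_inner_smul_left]
  have p1 := polarH (fun z => |(DY K z).det| * (⟪YY K z, e⟫_ℝ - c * sfn K z)) (sfn K) 1
    (by fun_prop) cs (fun x hx ρ hρ => by
      rw [DY_smul hK hρ hx, YY_smul hK hρ.le, b1 x hx ρ hρ, real_inner_smul_left]; ring) b1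
    (fun x hx => sfn_pos hK hx)
  have p2 := polarH (fun z => |(DY K z).det| * (⟪YY K z, e⟫_ℝ - c * sfn K z) ^ 2) (sfn K) 2
    (by fun_prop) cs (fun x hx ρ hρ => by
      rw [DY_smul hK hρ hx, YY_smul hK hρ.le, b1 x hx ρ hρ, real_inner_smul_left]; ring) b1
    (fun x hx => sfn_pos hK hx)
  have p3 := polarH (fun z => |(DY K z).det| * (sfn K z * ⟪hessA K z e, e⟫_ℝ + (⟪gradient (sfn K) z, e⟫_ℝ - c) ^ 2)) (sfn K) 0
    (by fun_prop) cs (fun x hx ρ hρ => by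
      rw [DY_smul hK hρ hx, grad_smul hK hρ hx, b1 x hx ρ hρ, ← hess_smul hK hρ hx, smul_apply,
        real_inner_smul_left]; ring) b1
    (fun x hx => sfn_pos hK hx)
  have q1 : ∫ x : Sph n, |(DY K x).det| * (⟪YY K x, e⟫_ℝ - c * sfn K x) / sfn K x ^ (n + 1 + 1) ∂sphMeas n
      = ∫ x : Sph n, dens K x * (⟪gradient (sfn K) x, e⟫_ℝ - c) ∂sphMeas n := by
    congr 1; ext x
    rw [hdd, hY, div_eq_iff (hpow x _)]
    ring
  have q2 : ∫ x : Sph n, |(DY K x).det| * (⟪YY K x, e⟫_ℝ - c * sfn K x) ^ 2 / sfn K x ^ (n + 2 + 1) ∂sphMeas n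
      = ∫ x : Sph n, dens K x * (⟪gradient (sfn K) x, e⟫_ℝ - c) ^ 2 ∂sphMeas n := by
    congr 1; ext x
    rw [hdd, hY, div_eq_iff (hpow x _)]
    ring
  have q3 : ∫ x : Sph n, |(DY K x).det| * (sfn K x * ⟪hessA K x e, e⟫_ℝ + (⟪gradient (sfn K) x, e⟫_ℝ - c) ^ 2) / sfn K x ^ (n + 0 + 1) ∂sphMeas n
      = ∫ x : Sph n, dens K x * (sfn K x * ⟪hessA K x e, e⟫_ℝ) ∂sphMeas n +
        ∫ x : Sph n, dens K x * (⟪gradient (sfn K) x, e⟫_ℝ - c) ^ 2 ∂sphMeas n := by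
    have hX := sph_cont cX
    have hD := dens_cont hK
    have hS := sph_cont cs
    have hA := sph_cont cA
    rw [← integral_add (sph_int (by fun_prop)) (sph_int (by fun_prop))]
    congr 1; ext x
    rw [hdd, div_eq_iff (hpow x _)]
    ring
  have v := var_z hK h0 hdet e c (by
    simp only [← mul_assoc]
    rw [p1.2, q1, mean_zero hK hd, mul_zero])
  simp only [← mul_assoc] at v
  simp only [mul_assoc] at p2 p3 v
  rw [p2.2, p3.2, JJ_rec, add_zero] at v
  simp only [← mul_assoc, add_zero] at q2 q3 v
  rw [q2, q3, mul_comm _ (JJ n), mul_assoc] at v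
  have := le_of_mul_le_mul_left v (JJ_pos n)
  simp only [← mul_assoc]
  linarith

end var

lemma polarN {n : ℕ} (F : Eu n → ℝ) (k : ℕ) (hF : ContinuousOn F {0}ᶜ)
    (hFk : ∀ x : Eu n, x ≠ 0 → ∀ ρ : ℝ, 0 < ρ → F (ρ • x) = ρ ^ k * F x) :
    Integrable (fun z => F z * Real.exp (-(‖z‖ ^ 2 / 2))) ∧
    ∫ z, F z * Real.exp (-(‖z‖ ^ 2 / 2)) = JJ (n + k) * ∫ x : Sph n, F x ∂sphMeas n := by
  have := polarH F (fun z => ‖z‖) k hF continuous_norm.continuousOn hFk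
    (fun x _ ρ hρ => by rw [norm_smul, Real.norm_of_nonneg hρ.le]) (fun x hx => norm_pos_iff.2 hx)
  refine ⟨this.1, this.2.trans ?_⟩
  simp

lemma sph_ibp {n : ℕ} {F F' : Eu n → ℝ} {e : Eu n} (hF : ContinuousOn F {0}ᶜ)
    (hF' : ContinuousOn F' {0}ᶜ)
    (h1 : ∀ x : Eu n, x ≠ 0 → ∀ ρ : ℝ, 0 < ρ → F (ρ • x) = ρ * F x)
    (h0 : ∀ x : Eu n, x ≠ 0 → ∀ ρ : ℝ, 0 < ρ → F' (ρ • x) = F' x)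
    (hd : ∀ z : Eu n, z ≠ 0 → HasLineDerivAt ℝ F (F' z) z e) :
    ∫ x : Sph n, F' x ∂sphMeas n = (n + 1) * ∫ x : Sph n, F x * ⟪(x : Eu n), e⟫_ℝ ∂sphMeas n := by
  have a1 := polarN (fun z => F' z * ‖z‖ ^ 2) 2 (by fun_prop) (fun x hx ρ hρ => by
    rw [h0 x hx ρ hρ, norm_smul, Real.norm_of_nonneg hρ.le]; ring)
  have a2 := polarN (fun z => F z * ⟪z, e⟫_ℝ) 2 (by fun_prop) (fun x hx ρ hρ => by
    rw [h1 x hx ρ hρ, real_inner_smul_left]; ring)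
  have a3 := polarN (fun z => F z * ⟪z, e⟫_ℝ * ‖z‖ ^ 2) 4 (by fun_prop) (fun x hx ρ hρ => by
    rw [h1 x hx ρ hρ, real_inner_smul_left, norm_smul, Real.norm_of_nonneg hρ.le]; ring)
  have a4 := polarN (fun z => F z * ‖z‖ ^ 2) 3 (by fun_prop) (fun x hx ρ hρ => by
    rw [h1 x hx ρ hρ, norm_smul, Real.norm_of_nonneg hρ.le]; ring)
  set g : Eu n → ℝ := fun z => F z * ‖z‖ ^ 2 * Real.exp (-(‖z‖ ^ 2 / 2)) with hg
  set g0 : Eu n → ℝ := fun z => F' z * ‖z‖ ^ 2 * Real.exp (-(‖z‖ ^ 2 / 2)) +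
    2 * (F z * ⟪z, e⟫_ℝ * Real.exp (-(‖z‖ ^ 2 / 2))) -
    F z * ⟪z, e⟫_ℝ * ‖z‖ ^ 2 * Real.exp (-(‖z‖ ^ 2 / 2)) with hg0
  have hg0i : Integrable g0 := (a1.1.add (a2.1.const_mul 2)).sub a3.1
  have hder : ∀ z, HasLineDerivAt ℝ g (g0 z) z e := by
    intro z
    by_cases hz : z = 0
    · subst hz
      have : g0 0 = 0 := by simp [hg0]
      rw [this]
      by_cases he : e = 0
      · subst he; exact hasLineDerivAt_zero
      have he' : -e ≠ 0 := neg_ne_zero.2 he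
      unfold HasLineDerivAt
      have hbig : (fun t : ℝ => g (0 + t • e)) =O[𝓝 0] fun t => ‖t - 0‖ ^ 2 := by
        refine Asymptotics.IsBigO.of_bound ((|F e| + |F (-e)|) * ‖e‖ ^ 2) ?_
        have : ∀ᶠ t : ℝ in 𝓝 0, |t| < 1 := by
          have := Metric.ball_mem_nhds (0:ℝ) one_pos
          filter_upwards [this] with t ht
          simpa using ht
        filter_upwards [this] with t ht
        have hb : |F (t • e)| * t ^ 2 ≤ (|F e| + |F (-e)|) * t ^ 2 := by
          rcases lt_trichotomy t 0 with h | h | h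
          · have : t • e = (-t) • (-e) := by simp
            rw [this, h1 _ he' _ (by linarith), abs_mul, abs_neg]
            gcongr
            nlinarith [abs_nonneg (F e), abs_nonneg (F (-e)), abs_nonneg t]
          · simp [h]
          · rw [h1 _ he _ h, abs_mul]
            gcongr
            nlinarith [abs_nonneg (F e), abs_nonneg (F (-e)), abs_nonneg t]
        have hexp : Real.exp (-(‖t • e‖ ^ 2 / 2)) ≤ 1 := Real.exp_le_one_iff.2 (by
          have := sq_nonneg ‖t • e‖; linarith)
        simp only [hg, zero_add, sub_zero, norm_mul, Real.norm_eq_abs, Real.abs_exp, norm_smul]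
        rw [norm_smul, Real.norm_eq_abs] at hexp
        simp only [abs_pow, abs_norm, abs_mul, mul_pow, sq_abs] at hexp ⊢
        calc _ ≤ |F (t • e)| * (t ^ 2 * ‖e‖ ^ 2) * 1 := by gcongr
          _ = (|F (t • e)| * t ^ 2) * ‖e‖ ^ 2 := by ring
          _ ≤ ((|F e| + |F (-e)|) * t ^ 2) * ‖e‖ ^ 2 := by gcongr
          _ = _ := by ring
      have := hbig.hasFDerivAt (𝕜 := ℝ) one_lt_two
      exact this.hasDerivAt.congr_deriv (by simp)
    · have d1 : HasLineDerivAt ℝ (fun z : Eu n => ‖z‖ ^ 2) (2 * ⟪z, e⟫_ℝ) z e := by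
        have := (hasStrictFDerivAt_norm_sq z).hasFDerivAt.hasLineDerivAt e
        simpa using this
      have d2 := hd z hz
      have d3 : HasDerivAt (fun t : ℝ => Real.exp (-(‖z + t • e‖ ^ 2 / 2))) _ 0 :=
        (((show HasDerivAt (fun t : ℝ => ‖z + t • e‖ ^ 2) _ 0 from d1).div_const 2).neg).exp
      have d4 := ((show HasDerivAt (fun t : ℝ => F (z + t • e)) _ 0 from d2).mul
        (show HasDerivAt (fun t : ℝ => ‖z + t • e‖ ^ 2) _ 0 from d1)).mul d3
      unfold HasLineDerivAt
      refine d4.congr_deriv ?_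
      simp [hg0]
      ring
  have key := integral_bilinear_hasLineDerivAt_right_eq_neg_left_of_integrable
    (f := fun _ : Eu n => (1:ℝ)) (f' := fun _ => (0:ℝ)) (g := g) (g' := g0) (v := e)
    (B := ContinuousLinearMap.mul ℝ ℝ) (μ := volume) (by simp) (by simpa using hg0i)
    (by simpa using a4.1) (fun x _ => by
      unfold HasLineDerivAt; exact hasDerivAt_const _ _) (fun x _ => hder x)
  simp only [ContinuousLinearMap.mul_apply', one_mul, zero_mul, integral_zero, neg_zero] at key
  have i12 := a1.1.add (a2.1.const_mul 2)
  have e0 := integral_sub i12 a3.1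
  simp only [Pi.add_apply] at e0
  simp only [hg0] at key
  rw [e0] at key
  have e1 := integral_add a1.1 (a2.1.const_mul 2)
  rw [e1, integral_const_mul, a1.2, a2.2, a3.2] at key
  have j := JJ_rec (n + 2)
  rw [show n + 2 + 2 = n + 4 by ring] at j
  rw [j] at key
  push_cast at key
  simp only [sph_norm, one_pow, mul_one] at key
  have jp := JJ_pos (n + 2)
  have : JJ (n+2) * (∫ x : Sph n, F' x ∂sphMeas n - (n + 1) * ∫ x : Sph n, F x * ⟪(x : Eu n), e⟫_ℝ ∂sphMeas n) = 0 := by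
    linarith
  have := (mul_eq_zero.1 this).resolve_left jp.ne'
  linarith

/-- gradient of the translated support function -/
noncomputable def Xt {n : ℕ} (K : Set (Eu n)) (z : Eu n) : Eu n := gradient (sfn K) z - cK K

lemma hld_congr {n : ℕ} {F : Eu n → ℝ} {a b : ℝ} {z e : Eu n} (h : HasLineDerivAt ℝ F a z e) (hab : a = b) :
    HasLineDerivAt ℝ F b z e := hab ▸ h

lemma ibp_lin {n : ℕ} (u e : Eu n) :
    (sphMeas n).real Set.univ * ⟪u, e⟫_ℝ = (n + 1) * ∫ x : Sph n, ⟪(x : Eu n), u⟫_ℝ * ⟪(x : Eu n), e⟫_ℝ ∂sphMeas n := by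
  rw [← sph_ibp (F := fun z => ⟪z, u⟫_ℝ) (F' := fun _ => ⟪u, e⟫_ℝ) (by fun_prop) (by fun_prop)
    (fun x _ ρ _ => real_inner_smul_left _ _ _) (fun x _ ρ _ => rfl) (fun z _ => ?_)]
  · simp
  · have := ((innerSL ℝ u).hasFDerivAt (x := z)).hasLineDerivAt e
    have e1 : (fun z => ⟪z, u⟫_ℝ) = fun z => innerSL ℝ u z := by
      ext w; simp [real_inner_comm]
    rw [e1]
    exact this

lemma sph_mean0 {n : ℕ} (hn : 1 ≤ n) (e : Eu n) : ∫ x : Sph n, ⟪(x : Eu n), e⟫_ℝ ∂sphMeas n = 0 := by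
  have := sph_ibp (n := n) (F := fun z => ‖z‖) (F' := fun z => ‖z‖⁻¹ * ⟪z, e⟫_ℝ) (e := e) (by fun_prop)
    (ContinuousOn.mul (ContinuousOn.inv₀ (by fun_prop) (fun x hx => norm_ne_zero_iff.2 hx)) (by fun_prop))
    (fun x _ ρ h => by rw [norm_smul, Real.norm_of_nonneg h.le])
    (fun x hx ρ h => by
      have := norm_ne_zero_iff.2 hx
      rw [norm_smul, Real.norm_of_nonneg h.le, real_inner_smul_left]
      field_simp) (fun z hz => by
      have h2 := ((hasStrictFDerivAt_norm_sq z).hasFDerivAt.sqrt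
        (by have := norm_pos_iff.2 hz; positivity)).hasLineDerivAt e
      simp only [Real.sqrt_sq (norm_nonneg _)] at h2
      refine hld_congr h2 ?_
      simp [smul_apply]
      field_simp)
  simp only [sph_norm, inv_one, one_mul] at this
  have hn' : (1:ℝ) ≤ n := by exact_mod_cast hn
  nlinarith

section
variable {n : ℕ} {K : Set (Eu n)} (hK : IsSmoothConvexBody K)
include hK

lemma Xt_co : ContinuousOn (Xt K) {0}ᶜ := (grad_co hK).sub continuousOn_const

lemma Xt_smul {t : ℝ} (ht : 0 < t) {z : Eu n} (hz : z ≠ 0) : Xt K (t • z) = Xt K z := by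
  rw [Xt, Xt, grad_smul hK ht hz]

lemma tsfn_eq {z : Eu n} (hz : z ≠ 0) : tsfn K z = ⟪z, Xt K z⟫_ℝ := by
  rw [tsfn, Xt, inner_sub_right, inner_grad hK hz]

lemma tsfn_cont : Continuous (tsfn K) := by
  unfold tsfn
  have := sfn_cont hK
  fun_prop

lemma tsfn_smul {t : ℝ} (ht : 0 ≤ t) (z : Eu n) : tsfn K (t • z) = t * tsfn K z := by
  rw [tsfn, tsfn, sfn_smul hK.compact hK.ne ht, real_inner_smul_left]; ring

lemma tsfn_hasFDeriv {z : Eu n} (hz : z ≠ 0) : HasFDerivAt (tsfn K) (innerSL ℝ (Xt K z)) z := by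
  have h1 := (sfn_hasGrad hK hz).hasFDerivAt.sub ((innerSL ℝ (cK K)).hasFDerivAt (x := z))
  have e1 : tsfn K = (sfn K) - fun z => innerSL ℝ (cK K) z := by
    ext w; simp [tsfn, real_inner_comm]
  rw [e1]
  refine h1.congr_fderiv ?_
  ext w
  simp [Xt]

lemma ibp_h (e : Eu n) :
    ∫ x : Sph n, ⟪Xt K x, e⟫_ℝ ∂sphMeas n = (n + 1) * ∫ x : Sph n, tsfn K x * ⟪(x : Eu n), e⟫_ℝ ∂sphMeas n := by
  have hX := Xt_co hK
  refine sph_ibp (F := tsfn K) (F' := fun z => ⟪Xt K z, e⟫_ℝ) (tsfn_cont hK).continuousOn (by fun_prop)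
    (fun x hx ρ hρ => tsfn_smul hK hρ.le x) (fun x hx ρ hρ => by simp only [Xt_smul hK hρ hx])
    (fun z hz => ?_)
  have := (tsfn_hasFDeriv hK hz).hasLineDerivAt e
  simpa using this

lemma ibp_hX (e : Eu n) :
    ∫ x : Sph n, (⟪gradient (sfn K) x, e⟫_ℝ * ⟪Xt K x, e⟫_ℝ + sfn K x * ⟪hessA K x e, e⟫_ℝ) ∂sphMeas n
      = (n + 1) * ∫ x : Sph n, (sfn K x * ⟪Xt K x, e⟫_ℝ) * ⟪(x : Eu n), e⟫_ℝ ∂sphMeas n := by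
  have hX := Xt_co hK
  have hs := sfn_co hK
  have hg := grad_co hK
  have hh := hess_co hK
  refine sph_ibp (F := fun z => sfn K z * ⟪Xt K z, e⟫_ℝ)
    (F' := fun z => ⟪gradient (sfn K) z, e⟫_ℝ * ⟪Xt K z, e⟫_ℝ + sfn K z * ⟪hessA K z e, e⟫_ℝ) (by fun_prop)
    (by fun_prop) (fun x hx ρ hρ => ?_) (fun x hx ρ hρ => ?_) (fun z hz => ?_)
  · simp only [Xt_smul hK hρ hx, sfn_smul hK.compact hK.ne hρ.le]; ring
  · simp only [Xt_smul hK hρ hx, sfn_smul hK.compact hK.ne hρ.le, grad_smul hK hρ hx]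
    rw [← hess_smul hK hρ hx]
    simp only [smul_apply, real_inner_smul_left]
    ring
  · have d1 := (sfn_hasGrad hK hz).hasFDerivAt
    have d2 : HasFDerivAt (fun z => ⟪Xt K z, e⟫_ℝ) _ z :=
      (((grad_hasFDeriv hK hz).sub_const (cK K)).inner ℝ (hasFDerivAt_const e z))
    have d3 := (d1.mul d2).hasLineDerivAt e
    refine hld_congr d3 ?_
    simp [fderivInnerCLM_apply]
    ring

omit hK in
lemma basis_sum (u v : Eu n) :
    ∑ i, ⟪u, EuclideanSpace.basisFun (Fin (n+1)) ℝ i⟫_ℝ * ⟪v, EuclideanSpace.basisFun (Fin (n+1)) ℝ i⟫_ℝ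
      = ⟪u, v⟫_ℝ := by
  rw [← (EuclideanSpace.basisFun (Fin (n+1)) ℝ).sum_inner_mul_inner u v]
  refine Finset.sum_congr rfl fun i _ => ?_
  rw [real_inner_comm v]

lemma energy (hn : 1 ≤ n) (h0 : (0 : Eu n) ∈ interior K) {ε : ℝ} (hε : 0 < ε) (hε1 : ε < 1)
    (hd : ∀ x : Sph n, 1 - ε ≤ dens K (x : Eu n) ∧ dens K (x : Eu n) ≤ 1 + ε) :
    ∫ x : Sph n, (‖Xt K x‖ ^ 2 - tsfn K x ^ 2) ∂sphMeas n ≤ 2 * ε * ∫ x : Sph n, ‖Xt K x‖ ^ 2 ∂sphMeas n := by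
  have hX := sph_cont (Xt_co hK)
  have hs := sph_cont (sfn_co hK)
  have hg := sph_cont (grad_co hK)
  have hh := sph_cont (hess_co hK)
  have hD := dens_cont hK
  have ht := sph_cont (tsfn_cont hK).continuousOn
  have hdp : ∀ x : Sph n, 0 < dens K x := fun x => by linarith [(hd x).1]
  have one : ∀ e : Eu n, n * (1 - ε) * ∫ x : Sph n, ⟪Xt K x, e⟫_ℝ * ⟪Xt K x, e⟫_ℝ ∂sphMeas n ≤
      (1 + ε) * ((n + 1) * ∫ x : Sph n, sfn K x * (⟪Xt K x, e⟫_ℝ * ⟪(x : Eu n), e⟫_ℝ) ∂sphMeas n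
        - ∫ x : Sph n, ⟪gradient (sfn K) x, e⟫_ℝ * ⟪Xt K x, e⟫_ℝ ∂sphMeas n) := by
    intro e
    have h1 := sphVar hK hdp h0 e
    have h2 := ibp_hX hK e
    rw [integral_add (sph_int (by fun_prop)) (sph_int (by fun_prop))] at h2
    have h3 : (1 - ε) * ∫ x : Sph n, ⟪Xt K x, e⟫_ℝ * ⟪Xt K x, e⟫_ℝ ∂sphMeas n ≤
        ∫ x : Sph n, dens K x * (⟪gradient (sfn K) x, e⟫_ℝ - ⟪cK K, e⟫_ℝ)^2 ∂sphMeas n := by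
      rw [← integral_const_mul]
      refine integral_mono (sph_int (by fun_prop)) (sph_int (by fun_prop)) fun x => ?_
      simp only [Xt, inner_sub_left, ← sq]
      exact mul_le_mul_of_nonneg_right (hd x).1 (sq_nonneg _)
    have h4 : ∫ x : Sph n, dens K x * (sfn K x * ⟪hessA K x e, e⟫_ℝ) ∂sphMeas n ≤
        (1 + ε) * ∫ x : Sph n, sfn K x * ⟪hessA K x e, e⟫_ℝ ∂sphMeas n := by
      rw [← integral_const_mul]
      refine integral_mono (sph_int (by fun_prop)) (sph_int (by fun_prop)) fun x => ?_
      exact mul_le_mul_of_nonneg_right (hd x).2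
        (mul_nonneg (sfn_pos hK (sph_ne x)).le (hess_nonneg hK (sph_ne x) e))
    have h5 : ∫ x : Sph n, sfn K x * (⟪Xt K x, e⟫_ℝ * ⟪(x : Eu n), e⟫_ℝ) ∂sphMeas n =
        ∫ x : Sph n, (sfn K x * ⟪Xt K x, e⟫_ℝ) * ⟪(x : Eu n), e⟫_ℝ ∂sphMeas n := by
      simp only [mul_assoc]
    rw [h5, ← h2, add_sub_cancel_left]
    calc _ = n * ((1 - ε) * ∫ x : Sph n, ⟪Xt K x, e⟫_ℝ * ⟪Xt K x, e⟫_ℝ ∂sphMeas n) := by ring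
      _ ≤ _ := mul_le_mul_of_nonneg_left h3 (Nat.cast_nonneg n)
      _ ≤ _ := h1
      _ ≤ _ := h4
  have sum := Finset.sum_le_sum (s := Finset.univ)
    fun i _ => one (EuclideanSpace.basisFun (Fin (n+1)) ℝ i)
  rw [← Finset.mul_sum, ← Finset.mul_sum, Finset.sum_sub_distrib, ← Finset.mul_sum,
    ← integral_finsetSum _ (fun i _ => sph_int (by fun_prop)),
    ← integral_finsetSum _ (fun i _ => sph_int (by fun_prop)),
    ← integral_finsetSum _ (fun i _ => sph_int (by fun_prop))] at sum
  simp only [← Finset.mul_sum, basis_sum] at sum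
  have hc := ibp_h hK (cK K)
  have e1 : ∫ x : Sph n, sfn K x * ⟪Xt K x, (x : Eu n)⟫_ℝ ∂sphMeas n =
      ∫ x : Sph n, tsfn K x ^ 2 ∂sphMeas n + ∫ x : Sph n, tsfn K x * ⟪(x : Eu n), cK K⟫_ℝ ∂sphMeas n := by
    rw [← integral_add (sph_int (by fun_prop)) (sph_int (by fun_prop))]
    refine integral_congr_ae (.of_forall fun x => ?_)
    simp only
    rw [real_inner_comm, ← tsfn_eq hK (sph_ne x), show sfn K x = tsfn K x + ⟪(x : Eu n), cK K⟫_ℝ by simp [tsfn]]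
    ring
  have e2 : ∫ x : Sph n, ⟪gradient (sfn K) x, Xt K x⟫_ℝ ∂sphMeas n =
      ∫ x : Sph n, ‖Xt K x‖ ^ 2 ∂sphMeas n + ∫ x : Sph n, ⟪Xt K x, cK K⟫_ℝ ∂sphMeas n := by
    rw [← integral_add (sph_int (by fun_prop)) (sph_int (by fun_prop))]
    refine integral_congr_ae (.of_forall fun x => ?_)
    simp only
    rw [← real_inner_self_eq_norm_sq, show gradient (sfn K) x = Xt K x + cK K by simp [Xt], inner_add_left,
      real_inner_comm (Xt K x) (cK K)]
  rw [e1, e2, hc] at sum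
  simp only [real_inner_self_eq_norm_sq] at sum
  have hnn : 0 ≤ ∫ x : Sph n, (‖Xt K x‖ ^ 2 - tsfn K x ^ 2) ∂sphMeas n := by
    refine integral_nonneg fun x => ?_
    simp only [Pi.zero_apply]
    rw [tsfn_eq hK (sph_ne x)]
    have := abs_real_inner_le_norm (x : Eu n) (Xt K x)
    rw [sph_norm, one_mul] at this
    have := sq_le_sq' (neg_le_of_abs_le this) (le_of_abs_le this)
    linarith
  have hsq : 0 ≤ ∫ x : Sph n, ‖Xt K x‖ ^ 2 ∂sphMeas n := integral_nonneg fun x => sq_nonneg _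
  have hsub := integral_sub (μ := sphMeas n) (f := fun x : Sph n => ‖Xt K x‖ ^ 2) (g := fun x : Sph n => tsfn K x ^ 2)
    (sph_int (by fun_prop)) (sph_int (by fun_prop))
  rw [hsub] at hnn ⊢
  set a := ∫ x : Sph n, ‖Xt K x‖ ^ 2 ∂sphMeas n
  set b := ∫ x : Sph n, tsfn K x ^ 2 ∂sphMeas n
  have hn' : (1:ℝ) ≤ n := by exact_mod_cast hn
  have key : (n + 1) * (a - b) ≤ (n + 1) * (2 * ε * a) := by
    have k1 : (1 + ε) * ((n + 1) * (a - b)) ≤ 2 * n * ε * a := by linarith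
    have k2 : 0 ≤ ε * ((n + 1) * (a - b)) := by positivity
    have k3 : 0 ≤ 2 * ε * a := by positivity
    linarith
  exact le_of_mul_le_mul_left key (by positivity)
end

lemma gauss_poincare {n : ℕ} {f : Eu n → ℝ} {X : Eu n → Eu n} {L : ℝ} (hL : 0 ≤ L)
    (hlip : ∀ a b, |f a - f b| ≤ L * ‖a - b‖)
    (hf0 : f 0 = 0)
    (hd : ∀ z : Eu n, z ≠ 0 → HasFDerivAt f (innerSL ℝ (X z)) z)
    (hmean : ∫ y, f y * Real.exp (-(‖y‖ ^ 2 / 2)) = 0) :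
    ∫ y, f y ^ 2 * Real.exp (-(‖y‖ ^ 2 / 2)) ≤ ∫ y, ‖X y‖ ^ 2 * Real.exp (-(‖y‖ ^ 2 / 2)) := by
  have hfc : Continuous f := by
    refine (LipschitzWith.of_dist_le_mul (K := L.toNNReal) fun a b => ?_).continuous
    rw [Real.dist_eq, dist_eq_norm, Real.coe_toNNReal _ hL]; exact hlip a b
  set φ : ℝ → Eu n → Eu n → ℝ := fun s u m => (f (m + s • u) - f (m - s • u)) / s - ‖u‖ ^ 2 with hφ
  have hφ1 : ∀ s, 0 < s → ∀ u m, φ s u m ≤ 2 * L * ‖u‖ - ‖u‖ ^ 2 := by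
    intro s hs u m
    have := le_of_abs_le (hlip (m + s • u) (m - s • u))
    rw [show m + s • u - (m - s • u) = (2 * s) • u by module, norm_smul,
      Real.norm_of_nonneg (by positivity)] at this
    simp only [hφ]
    gcongr
    rw [div_le_iff₀ hs]
    linarith
  have hφ2 : ∀ s, 0 < s → ∀ u m, φ s u m ≤ L ^ 2 := fun s hs u m =>
    (hφ1 s hs u m).trans (by nlinarith [sq_nonneg (L - ‖u‖)])
  have hφ0 : ∀ s m, φ s 0 m = 0 := by intro s m; simp [hφ]
  have hbdd : ∀ s, 0 < s → ∀ m, BddAbove (Set.range fun u => φ s u m) := by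
    rintro s hs m
    exact ⟨L ^ 2, by rintro _ ⟨u, rfl⟩; exact hφ2 s hs u m⟩
  set q : ℝ → Eu n → ℝ := fun s m => ⨆ u, φ s u m with hq
  have hq0 : ∀ s, 0 < s → ∀ m, 0 ≤ q s m := fun s hs m => by
    have := le_ciSup (hbdd s hs m) 0
    simpa only [hφ0] using this
  have hqL : ∀ s, 0 < s → ∀ m, q s m ≤ L ^ 2 := fun s hs m => ciSup_le fun u => hφ2 s hs u m
  have hqm : ∀ s, 0 < s → Measurable (q s) := by
    intro s hs
    refine LowerSemicontinuous.measurable ?_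
    refine lowerSemicontinuous_ciSup (hbdd s hs) fun u => ?_
    refine Continuous.lowerSemicontinuous ?_
    simp only [hφ]
    fun_prop
  have hsk : ∀ k : ℕ, (0:ℝ) < 1 / ((k:ℝ) + 1) := fun k => by positivity
  have main := var_of_pl (n + 1) (fun y => ‖y‖ ^ 2 / 2) f (by fun_prop) hfc.measurable
    (fun k => q (1 / ((k:ℝ) + 1))) (fun y => ‖X y‖ ^ 2) (1/2) (L ^ 2 + L) (by norm_num) (by positivity)
    (fun y => by linarith) (fun y => by
      have := hlip y 0
      rw [hf0, sub_zero, sub_zero] at this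
      refine this.trans ?_
      gcongr
      nlinarith) (fun k => hqm _ (hsk k)) (fun k m => by
      rw [abs_of_nonneg (hq0 _ (hsk k) m)]
      linarith [hqL _ (hsk k) m]) ?_ ?_ hmean
  · exact main.2.2.2
  · have : ∀ᵐ y : Eu n, y ≠ 0 := by simp [ae_iff]
    filter_upwards [this] with m hm
    have hlim : Filter.Tendsto (fun k : ℕ => 1 / ((k:ℝ) + 1)) Filter.atTop (𝓝 0) :=
      tendsto_one_div_add_atTop_nhds_zero_nat
    have hx := hd m hm
    rw [Metric.tendsto_atTop]
    intro η0 hη0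
    obtain ⟨η, hη, hη2⟩ : ∃ η : ℝ, 0 < η ∧ 2 * η * ‖X m‖ + η ^ 2 < η0 := by
      have hc : Filter.Tendsto (fun η : ℝ => 2 * η * ‖X m‖ + η ^ 2) (𝓝[>] 0) (𝓝 0) := by
        have : Continuous (fun η : ℝ => 2 * η * ‖X m‖ + η ^ 2) := by fun_prop
        have := this.tendsto 0
        simp only [mul_zero, zero_mul, add_zero, ne_eq, OfNat.ofNat_ne_zero, not_false_eq_true, zero_pow] at this
        exact this.mono_left nhdsWithin_le_nhds
      obtain ⟨η, h1, h2⟩ := ((hc.eventually (gt_mem_nhds hη0)).and self_mem_nhdsWithin).exists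
      exact ⟨η, h2, h1⟩
    rw [hasFDerivAt_iff_isLittleO_nhds_zero] at hx
    have hx := hx.def hη
    rw [Metric.eventually_nhds_iff] at hx
    obtain ⟨δ, hδ, hx⟩ := hx
    have hB : 0 < 2 * L + ‖X m‖ + 1 := by positivity
    obtain ⟨k0, hk0⟩ := (Metric.tendsto_atTop.1 hlim) (δ / (2 * L + ‖X m‖ + 1)) (by positivity)
    refine ⟨k0, fun k hk => ?_⟩
    have hs := hk0 k hk
    have hs0 := hsk k
    generalize 1 / ((k:ℝ) + 1) = s at hs hs0
    rw [Real.dist_eq, sub_zero, abs_of_pos hs0, lt_div_iff₀ hB] at hs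
    have approx : ∀ u : Eu n, ‖u‖ ≤ 2 * L + ‖X m‖ →
        |φ s u m - (2 * ⟪X m, u⟫_ℝ - ‖u‖ ^ 2)| ≤ 2 * η * ‖u‖ := by
      intro u hu
      have hn : ‖s • u‖ = s * ‖u‖ := by rw [norm_smul, Real.norm_of_nonneg hs0.le]
      have hlt : s * ‖u‖ < δ := lt_of_le_of_lt (by gcongr; linarith) hs
      have a1 := @hx (s • u) (by simpa [hn] using hlt)
      have a2 := @hx (-(s • u)) (by simpa [hn] using hlt)
      simp only [norm_neg, hn, Real.norm_eq_abs, innerSL_apply_apply, inner_neg_right,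
        real_inner_smul_right, ← sub_eq_add_neg] at a1 a2
      have e : φ s u m - (2 * ⟪X m, u⟫_ℝ - ‖u‖ ^ 2) =
        ((f (m + s • u) - f m - s * ⟪X m, u⟫_ℝ) - (f (m - s • u) - f m - -(s * ⟪X m, u⟫_ℝ))) / s := by
        simp only [hφ]; field_simp; ring
      rw [e, abs_div, abs_of_pos hs0, div_le_iff₀ hs0]
      refine (abs_sub _ _).trans ?_
      linarith
    have up : q s m ≤ (‖X m‖ + η) ^ 2 := by
      refine ciSup_le fun u => ?_
      by_cases hu : ‖u‖ ≤ 2 * L + ‖X m‖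
      · have h1 := le_of_abs_le (approx u hu)
        have h2 := real_inner_le_norm (X m) u
        nlinarith [sq_nonneg (‖X m‖ + η - ‖u‖)]
      · push Not at hu
        have h1 := hφ1 s hs0 u m
        have : 2 * L * ‖u‖ - ‖u‖ ^ 2 ≤ 0 := by nlinarith [norm_nonneg (X m), norm_nonneg u]
        linarith [sq_nonneg (‖X m‖ + η)]
    have lo : ‖X m‖ ^ 2 - 2 * η * ‖X m‖ ≤ q s m := by
      have h1 := neg_le_of_abs_le (approx (X m) (by linarith))
      have h2 := le_ciSup (hbdd s hs0 m) (X m)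
      rw [real_inner_self_eq_norm_sq] at h1
      change φ s (X m) m ≤ q s m at h2
      linarith
    rw [Real.dist_eq, abs_lt]
    constructor <;> nlinarith
  · intro k a b
    have hs0 := hsk k
    generalize 1 / ((k:ℝ) + 1) = s at hs0
    have h2 := le_ciSup (hbdd s hs0 ((1/2:ℝ) • (a + b))) ((1 / (2 * s)) • (a - b))
    change φ s _ _ ≤ q s _ at h2
    simp only [hφ, smul_smul] at h2
    rw [show s * (1 / (2 * s)) = 1 / 2 by field_simp,
      show (1/2:ℝ) • (a + b) + (1/2:ℝ) • (a - b) = a by module,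
      show (1/2:ℝ) • (a + b) - (1/2:ℝ) • (a - b) = b by module] at h2
    have h3 : s ^ 2 * ((f a - f b) / s - ‖(1 / (2 * s)) • (a - b)‖ ^ 2) ≤ s ^ 2 * q s ((1/2:ℝ) • (a + b)) := by
      gcongr
    rw [norm_smul, Real.norm_of_nonneg (by positivity), mul_pow] at h3
    have h4 : s ^ 2 * ((f a - f b) / s - (1 / (2 * s)) ^ 2 * ‖a - b‖ ^ 2) = s * (f a - f b) - ‖a - b‖ ^ 2 / 4 := by
      field_simp
      ring
    rw [h4] at h3
    have p := parallelogram_law_with_norm ℝ a b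
    rw [norm_smul, Real.norm_of_nonneg (by norm_num)]
    nlinarith

lemma sph_poincare {n : ℕ} {f : Eu n → ℝ} {X : Eu n → Eu n} {L : ℝ} (hL : 0 ≤ L)
    (hlip : ∀ a b, |f a - f b| ≤ L * ‖a - b‖)
    (hf1 : ∀ x : Eu n, ∀ ρ : ℝ, 0 ≤ ρ → f (ρ • x) = ρ * f x)
    (hX : ContinuousOn X {0}ᶜ)
    (hX0 : ∀ x : Eu n, x ≠ 0 → ∀ ρ : ℝ, 0 < ρ → X (ρ • x) = X x)
    (hd : ∀ z : Eu n, z ≠ 0 → HasFDerivAt f (innerSL ℝ (X z)) z)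
    (hmean : ∫ x : Sph n, f x ∂sphMeas n = 0) :
    (n + 1) * ∫ x : Sph n, f x ^ 2 ∂sphMeas n ≤ ∫ x : Sph n, ‖X x‖ ^ 2 ∂sphMeas n := by
  have hfc : ContinuousOn f {0}ᶜ := fun z hz => (hd z hz).continuousAt.continuousWithinAt
  have a1 := polarN f 1 hfc (fun x hx ρ hρ => by rw [hf1 x ρ hρ.le, pow_one])
  have a2 := polarN (fun z => f z ^ 2) 2 (by fun_prop) (fun x hx ρ hρ => by rw [hf1 x ρ hρ.le, mul_pow])
  have a3 := polarN (fun z => ‖X z‖ ^ 2) 0 (by fun_prop)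
    (fun x hx ρ hρ => by rw [hX0 x hx ρ hρ, pow_zero, one_mul])
  have := gauss_poincare hL hlip (by have := hf1 0 0 le_rfl; simpa using this) hd
    (by rw [a1.2, hmean, mul_zero])
  rw [a2.2, a3.2, JJ_rec, add_zero, mul_comm _ (JJ n), mul_assoc] at this
  exact le_of_mul_le_mul_left this (JJ_pos n)

lemma cap_bound {n : ℕ} {f : Eu n → ℝ} {L M ρ : ℝ} (hL : 0 < L)
    (hlip : ∀ a b, |f a - f b| ≤ L * ‖a - b‖) (x0 : Sph n) (hM : 0 < M) (hM0 : M = |f x0|) (hρ : ρ = M / (4 * L))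
    (hρ1 : ρ ≤ 1) :
    (volume (ball (0 : Eu n) 1)).toReal * ρ ^ n * M ^ 2 ≤ 2 ^ (n + 3) * ∫ x : Sph n, f x ^ 2 ∂sphMeas n := by
  have hρ0 : 0 < ρ := by rw [hρ]; positivity
  have hLρ : L * (2 * ρ) = M / 2 := by rw [hρ]; field_simp; norm_num
  have hfc : Continuous f := by
    refine (LipschitzWith.of_dist_le_mul (K := L.toNNReal) fun a b => ?_).continuous
    rw [Real.dist_eq, dist_eq_norm, Real.coe_toNNReal _ hL.le]; exact hlip a b
  have hvol : ∫ z, (ball (x0 : Eu n) ρ).indicator (fun _ => (1:ℝ)) z =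
      ρ ^ (n + 1) * (volume (ball (0 : Eu n) 1)).toReal := by
    rw [integral_indicator measurableSet_ball, setIntegral_const, smul_eq_mul, mul_one, Measure.real,
      Measure.addHaar_ball_of_pos _ _ hρ0, ENNReal.toReal_mul, finrank_Eu,
      ENNReal.toReal_ofReal (by positivity)]
  have hi : Integrable ((ball (x0 : Eu n) ρ).indicator (fun _ => (1:ℝ))) :=
    (integrable_indicator_iff measurableSet_ball).2 (integrableOn_const (by
      exact measure_ball_lt_top.ne))
  rw [polar0 hi] at hvol
  have hbound : ∫ x : Sph n, (∫ r in Set.Ioi (0:ℝ), r ^ n * (ball (x0 : Eu n) ρ).indicator (fun _ => (1:ℝ)) (r • (x : Eu n))) ∂sphMeas n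
      ≤ ∫ x : Sph n, (2 ^ n * (2 * ρ) * (4 / M ^ 2)) * f x ^ 2 ∂sphMeas n := by
    refine integral_mono_of_nonneg (.of_forall fun x => ?_) (sph_int (by fun_prop)) (.of_forall fun x => ?_)
    · refine setIntegral_nonneg measurableSet_Ioi fun r hr => ?_
      exact mul_nonneg (pow_nonneg (le_of_lt hr) _) (Set.indicator_nonneg (fun _ _ => zero_le_one) _)
    · simp only
      have hr : ∀ r : ℝ, 0 < r → r • (x : Eu n) ∈ ball (x0 : Eu n) ρ →
          |r - 1| ≤ ρ ∧ M ^ 2 / 4 ≤ f x ^ 2 := by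
        intro r hr h
        rw [mem_ball, dist_eq_norm] at h
        have h1 : |r - 1| ≤ ρ := by
          have := abs_norm_sub_norm_le (r • (x : Eu n)) (x0 : Eu n)
          rw [norm_smul, sph_norm, sph_norm, mul_one, Real.norm_of_nonneg hr.le] at this
          linarith
        refine ⟨h1, ?_⟩
        have h2 : ‖(x0 : Eu n) - x‖ ≤ 2 * ρ := by
          have e : (x0 : Eu n) - x = -(r • (x : Eu n) - x0) + (r - 1) • (x : Eu n) := by module
          rw [e]
          refine (norm_add_le _ _).trans ?_
          rw [norm_neg, norm_smul, sph_norm, mul_one, Real.norm_eq_abs]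
          linarith
        have h3 := hlip x0 x
        have h4 : L * ‖(x0 : Eu n) - x‖ ≤ M / 2 := by rw [← hLρ]; gcongr
        have h5 := abs_sub_abs_le_abs_sub (f x0) (f x)
        have h6 : M / 2 ≤ |f x| := by linarith
        rw [← sq_abs (f x)]
        nlinarith
      by_cases hx : M ^ 2 / 4 ≤ f x ^ 2
      · have s1 : ∫ r in Set.Ioi (0:ℝ), r ^ n * (ball (x0 : Eu n) ρ).indicator (fun _ => (1:ℝ)) (r • (x : Eu n))
            ≤ ∫ r in Set.Ioi (0:ℝ), (Set.Icc (1 - ρ) (1 + ρ)).indicator (fun _ => (2:ℝ) ^ n) r := by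
          refine integral_mono_of_nonneg ?_ ?_ ?_
          · refine (ae_restrict_iff' measurableSet_Ioi).2 (.of_forall fun r hr => ?_)
            exact mul_nonneg (pow_nonneg (le_of_lt hr) _) (Set.indicator_nonneg (fun _ _ => zero_le_one) _)
          · refine Integrable.integrableOn ?_
            exact (integrable_indicator_iff measurableSet_Icc).2 (integrableOn_const (by simp))
          · refine (ae_restrict_iff' measurableSet_Ioi).2 (.of_forall fun r h0 => ?_)
            simp only
            by_cases hb : r • (x : Eu n) ∈ ball (x0 : Eu n) ρ
            · have h1 := (abs_le.1 (hr r h0 hb).1)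
              rw [Set.indicator_of_mem hb, Set.indicator_of_mem (by constructor <;> linarith), mul_one]
              exact pow_le_pow_left₀ (le_of_lt h0) (by linarith) _
            · rw [Set.indicator_of_notMem hb, mul_zero]
              exact Set.indicator_nonneg (fun _ _ => by positivity) _
        have s2 : ∫ r in Set.Ioi (0:ℝ), (Set.Icc (1 - ρ) (1 + ρ)).indicator (fun _ => (2:ℝ) ^ n) r ≤ 2 ^ n * (2 * ρ) := by
          have : ∫ r in Set.Ioi (0:ℝ), (Set.Icc (1 - ρ) (1 + ρ)).indicator (fun _ => (2:ℝ) ^ n) r ≤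
              ∫ r, (Set.Icc (1 - ρ) (1 + ρ)).indicator (fun _ => (2:ℝ) ^ n) r :=
            setIntegral_le_integral ((integrable_indicator_iff measurableSet_Icc).2 (integrableOn_const (by simp)))
              (.of_forall fun r => Set.indicator_nonneg (fun _ _ => by positivity) _)
          refine this.trans ?_
          rw [integral_indicator measurableSet_Icc, setIntegral_const, Real.volume_real_Icc_of_le (by linarith), smul_eq_mul]
          apply le_of_eq; ring
        refine s1.trans (s2.trans ?_)
        have : 1 ≤ 4 / M ^ 2 * f x ^ 2 := by
          rw [div_mul_eq_mul_div, le_div_iff₀ (by positivity)]; linarith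
        rw [mul_assoc (2 ^ n * (2 * ρ))]
        exact le_mul_of_one_le_right (by positivity) this
      · have : ∀ r ∈ Set.Ioi (0:ℝ), r ^ n * (ball (x0 : Eu n) ρ).indicator (fun _ => (1:ℝ)) (r • (x : Eu n)) = 0 := by
          intro r h0
          rw [Set.indicator_of_notMem, mul_zero]
          intro hb
          exact hx (hr r h0 hb).2
        rw [setIntegral_congr_fun measurableSet_Ioi this]
        simp only [integral_zero]
        positivity
  rw [hvol, integral_const_mul] at hbound
  set I := ∫ x : Sph n, f x ^ 2 ∂sphMeas n
  set v := (volume (ball (0 : Eu n) 1)).toReal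
  have h1 : (ρ / M ^ 2) * (v * ρ ^ n * M ^ 2) ≤ (ρ / M ^ 2) * (2 ^ (n + 3) * I) := by
    calc _ = ρ ^ (n + 1) * v := by field_simp; ring
      _ ≤ _ := hbound
      _ = _ := by field_simp; ring
  exact le_of_mul_le_mul_left h1 (by positivity)

section
variable {n : ℕ} {K : Set (Eu n)} (hK : IsSmoothConvexBody K)
include hK

/-- mean of the translated support function -/
lemma int_tsfn (hn : 1 ≤ n) : ∫ x : Sph n, tsfn K x ∂sphMeas n = ∫ x : Sph n, sfn K x ∂sphMeas n := by
  have hs := sph_cont (sfn_co hK)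
  unfold tsfn
  rw [integral_sub (sph_int (by fun_prop)) (sph_int (by fun_prop)), sph_mean0 hn, sub_zero]

lemma norm_bound (hn : 1 ≤ n) {T : ℝ}
    (hT : ∫ x : Sph n, tsfn K x ∂sphMeas n = (sphMeas n).real Set.univ * T)
    (hω : 0 < (sphMeas n).real Set.univ) {p : Eu n} (hp : p ∈ K) : ‖p‖ ≤ 2 * (n + 1) * T := by
  have hs := sph_cont (sfn_co hK)
  rw [int_tsfn hK hn] at hT
  have hI : 0 ≤ ∫ x : Sph n, sfn K x ∂sphMeas n := integral_nonneg fun x => (sfn_pos hK (sph_ne x)).le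
  have hT0 : 0 ≤ T := by
    rw [hT] at hI
    exact nonneg_of_mul_nonneg_right hI hω
  by_cases hp0 : p = 0
  · subst hp0; simp; positivity
  have hpp : 0 < ‖p‖ := norm_pos_iff.2 hp0
  have h1 : ∫ x : Sph n, (1/2) * (⟪(x : Eu n), p⟫_ℝ + ‖p‖⁻¹ * (⟪(x : Eu n), p⟫_ℝ * ⟪(x : Eu n), p⟫_ℝ)) ∂sphMeas n ≤
      ∫ x : Sph n, sfn K x ∂sphMeas n := by
    refine integral_mono (sph_int (by fun_prop)) (sph_int (by fun_prop)) fun x => ?_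
    simp only
    have h2 := le_sfn hK.compact (x : Eu n) hp
    have h3 := (sfn_pos hK (sph_ne x)).le
    have h4 := abs_real_inner_le_norm (x : Eu n) p
    rw [sph_norm, one_mul, abs_le] at h4
    rw [inv_mul_eq_div]
    rcases le_total 0 ⟪(x : Eu n), p⟫_ℝ with h | h
    · have : ⟪(x : Eu n), p⟫_ℝ * ⟪(x : Eu n), p⟫_ℝ / ‖p‖ ≤ ⟪(x : Eu n), p⟫_ℝ := by
        rw [div_le_iff₀ hpp]; nlinarith
      linarith
    · have : ⟪(x : Eu n), p⟫_ℝ * ⟪(x : Eu n), p⟫_ℝ / ‖p‖ ≤ -⟪(x : Eu n), p⟫_ℝ := by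
        rw [div_le_iff₀ hpp]; nlinarith
      linarith
  rw [integral_const_mul, integral_add (sph_int (by fun_prop)) (sph_int (by fun_prop)), sph_mean0 hn,
    integral_const_mul, hT] at h1
  have h2 := ibp_lin p p
  rw [real_inner_self_eq_norm_sq] at h2
  set I := ∫ x : Sph n, ⟪(x : Eu n), p⟫_ℝ * ⟪(x : Eu n), p⟫_ℝ ∂sphMeas n
  set ω := (sphMeas n).real Set.univ
  have h3 : ω * ‖p‖ ≤ ω * (2 * (n + 1) * T) := by
    have : (n + 1) * (‖p‖⁻¹ * I) = ω * ‖p‖ := by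
      rw [show ((n:ℝ) + 1) * (‖p‖⁻¹ * I) = ‖p‖⁻¹ * ((n + 1) * I) by ring, ← h2]
      field_simp
    rw [← this]
    have : ‖p‖⁻¹ * I ≤ 2 * (ω * T) := by linarith
    calc _ ≤ ((n:ℝ) + 1) * (2 * (ω * T)) := by gcongr
      _ = _ := by ring
  exact le_of_mul_le_mul_left h3 hω

lemma c_bound (hd : ∀ x : Sph n, 0 < dens K x) {R : ℝ} (hR : ∀ p ∈ K, ‖p‖ ≤ R) : ‖cK K‖ ≤ R := by
  have hX := sph_cont (grad_co hK)
  have hD := dens_cont hK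
  by_contra hc
  push Not at hc
  have hR0 : 0 ≤ R := (norm_nonneg _).trans (hR _ hK.ne.some_mem)
  have h := mean_zero hK hd (cK K)
  have h2 : ∫ x : Sph n, dens K x * (⟪gradient (sfn K) x, cK K⟫_ℝ - ⟪cK K, cK K⟫_ℝ) ∂sphMeas n ≤
      ∫ x : Sph n, dens K x * (R * ‖cK K‖ - ‖cK K‖ ^ 2) ∂sphMeas n := by
    refine integral_mono (sph_int (by fun_prop)) (sph_int (by fun_prop)) fun x => ?_
    simp only
    rw [real_inner_self_eq_norm_sq]
    refine mul_le_mul_of_nonneg_left ?_ (hd x).le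
    gcongr
    refine (real_inner_le_norm _ _).trans ?_
    gcongr
    exact hR _ (grad_mem hK (sph_ne x))
  rw [h, integral_mul_const] at h2
  have h3 := dens_int_pos hK hd
  have h4 : R * ‖cK K‖ - ‖cK K‖ ^ 2 < 0 := by nlinarith
  nlinarith

end

lemma stab_core {n : ℕ} (hn : 1 ≤ n) {K : Set (Eu n)} (hK : IsSmoothConvexBody K)
    (h0 : (0 : Eu n) ∈ interior K) {ε : ℝ} (hε : 0 < ε) (hε1 : ε < 1)
    (hd : ∀ x : Sph n, 1 - ε ≤ dens K (x : Eu n) ∧ dens K (x : Eu n) ≤ 1 + ε) (x0 : Sph n) :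
    (volume (ball (0 : Eu n) 1)).toReal *
      |tsfn K (x0 : Eu n) / (⨍ y : Sph n, tsfn K (y : Eu n) ∂sphMeas n) - 1| ^ (n + 2) ≤
      (2 ^ (n + 3) * (2 * (4 * (n + 1)) ^ 2 * (sphMeas n).real Set.univ) * (20 * (n + 1)) ^ n) * ε := by
  have hX := sph_cont (Xt_co hK)
  have ht := sph_cont (tsfn_cont hK).continuousOn
  have hn1 : (1:ℝ) ≤ n := by exact_mod_cast hn
  have hω : 0 < (sphMeas n).real Set.univ := by
    refine ENNReal.toReal_pos ?_ (measure_ne_top _ _)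
    rw [sphMeas]
    exact (Measure.measure_univ_pos.2 (Measure.toSphere_ne_zero _)).ne'
  have hdp : ∀ x : Sph n, 0 < dens K x := fun x => by linarith [(hd x).1]
  set ω := (sphMeas n).real Set.univ with hωd
  set T := ⨍ y : Sph n, tsfn K (y : Eu n) ∂sphMeas n with hTd
  have hT : ∫ x : Sph n, tsfn K x ∂sphMeas n = ω * T := by
    rw [hTd, average_eq, smul_eq_mul, mul_inv_cancel_left₀ hω.ne']
  have hR : ∀ p ∈ K, ‖p‖ ≤ 2 * (n + 1) * T := fun p hp => norm_bound hK hn hT hω hp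
  have hT0 : 0 < T := by
    by_contra hneg
    push Not at hneg
    have h1 := inner_grad hK (sph_ne x0)
    have h2 := hR _ (grad_mem hK (sph_ne x0))
    have h3 : ‖gradient (sfn K) (x0 : Eu n)‖ ≤ 0 := h2.trans (mul_nonpos_of_nonneg_of_nonpos (by positivity) hneg)
    have h4 : gradient (sfn K) (x0 : Eu n) = 0 := norm_le_zero_iff.1 h3
    rw [h4, inner_zero_right] at h1
    exact (sfn_pos hK (sph_ne x0)).ne h1
  have hc := c_bound hK hdp hR
  have hXb : ∀ x : Sph n, ‖Xt K x‖ ≤ 4 * (n + 1) * T := fun x => by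
    refine (norm_sub_le _ _).trans ?_
    linarith [hR _ (grad_mem hK (sph_ne x))]
  have hE := energy hK hn h0 hε hε1 hd
  have hE2 : ∫ x : Sph n, ‖Xt K x‖ ^ 2 ∂sphMeas n ≤ ω * (4 * (n + 1) * T) ^ 2 := by
    calc _ ≤ ∫ x : Sph n, (4 * (n + 1) * T) ^ 2 ∂sphMeas n := by
          refine integral_mono (sph_int (by fun_prop)) (sph_int (by fun_prop)) fun x => ?_
          exact pow_le_pow_left₀ (norm_nonneg _) (hXb x) 2
      _ = _ := by rw [integral_const, smul_eq_mul]
  set f : Eu n → ℝ := fun z => tsfn K z - T * ‖z‖ with hf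
  set X : Eu n → Eu n := fun z => Xt K z - (T * ‖z‖⁻¹) • z with hXd
  set L := 5 * ((n:ℝ) + 1) * T with hL
  have hL0 : 0 < L := by positivity
  have hlip : ∀ a b, |f a - f b| ≤ L * ‖a - b‖ := by
    intro a b
    have e : f a - f b = (sfn K a - sfn K b) - ⟪a - b, cK K⟫_ℝ - T * (‖a‖ - ‖b‖) := by
      simp only [hf, tsfn, inner_sub_left]; ring
    have h1 := sfn_lip hK hR a b
    have h2 : |⟪a - b, cK K⟫_ℝ| ≤ 2 * (n + 1) * T * ‖a - b‖ := by
      refine (abs_real_inner_le_norm _ _).trans ?_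
      rw [mul_comm]
      gcongr
    have h3 : |T * (‖a‖ - ‖b‖)| ≤ T * ‖a - b‖ := by
      rw [abs_mul, abs_of_pos hT0]
      gcongr
      exact abs_norm_sub_norm_le a b
    rw [e]
    have h4 := (abs_sub (sfn K a - sfn K b - ⟪a - b, cK K⟫_ℝ) (T * (‖a‖ - ‖b‖))).trans
      (add_le_add (abs_sub (sfn K a - sfn K b) ⟪a - b, cK K⟫_ℝ) le_rfl)
    have h5 : 0 ≤ (n:ℝ) * T * ‖a - b‖ := by positivity
    rw [hL]
    linarith
  have hmean : ∫ x : Sph n, f x ∂sphMeas n = 0 := by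
    simp only [hf, sph_norm, mul_one]
    rw [integral_sub (sph_int (by fun_prop)) (sph_int (by fun_prop)), hT, integral_const, smul_eq_mul, sub_self]
  have hP := sph_poincare (f := f) (X := X) hL0.le hlip
    (fun x ρ hρ => by
      simp only [hf, tsfn_smul hK hρ, norm_smul, Real.norm_of_nonneg hρ]; ring)
    ((Xt_co hK).sub ((continuousOn_const.mul
      (ContinuousOn.inv₀ (by fun_prop) (fun x hx => norm_ne_zero_iff.2 hx))).smul continuousOn_id))
    (fun x hx ρ hρ => by
      have := norm_ne_zero_iff.2 hx
      simp only [hXd, Xt_smul hK hρ hx, norm_smul, Real.norm_of_nonneg hρ.le, smul_smul]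
      congr 2
      field_simp)
    (fun z hz => by
      have hz' := norm_pos_iff.2 hz
      have h2 := ((hasStrictFDerivAt_norm_sq z).hasFDerivAt.sqrt (by positivity))
      simp only [Real.sqrt_sq (norm_nonneg _)] at h2
      have h3 := (tsfn_hasFDeriv hK hz).sub (h2.const_mul T)
      refine h3.congr_fderiv ?_
      ext w
      simp [hXd]
      field_simp) hmean
  have hΨ : ∫ x : Sph n, ‖X x‖ ^ 2 ∂sphMeas n =
      ∫ x : Sph n, (‖Xt K x‖ ^ 2 - tsfn K x ^ 2) ∂sphMeas n + ∫ x : Sph n, f x ^ 2 ∂sphMeas n := by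
    have hfs : Continuous (fun x : Sph n => f x) := by simp only [hf]; fun_prop
    rw [← integral_add (sph_int (by fun_prop)) (sph_int (show Continuous (fun x : Sph n => f x ^ 2) from hfs.pow 2))]
    refine integral_congr_ae (.of_forall fun x => ?_)
    simp only [hXd, hf, sph_norm, inv_one, mul_one]
    rw [norm_sub_sq_real, real_inner_smul_right, norm_smul, sph_norm, Real.norm_of_nonneg hT0.le,
      real_inner_comm, ← tsfn_eq hK (sph_ne x)]
    ring
  have hI0 : 0 ≤ ∫ x : Sph n, f x ^ 2 ∂sphMeas n := integral_nonneg fun x => sq_nonneg _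
  have hI : ∫ x : Sph n, f x ^ 2 ∂sphMeas n ≤ 2 * ε * (ω * (4 * (n + 1) * T) ^ 2) := by
    have h1 : 2 * ε * ∫ x : Sph n, ‖Xt K x‖ ^ 2 ∂sphMeas n ≤ 2 * ε * (ω * (4 * (n + 1) * T) ^ 2) := by gcongr
    rw [hΨ] at hP
    nlinarith
  have hfx : tsfn K x0 / T - 1 = f x0 / T := by
    simp only [hf, sph_norm, mul_one]
    field_simp
  rw [hfx, abs_div, abs_of_pos hT0]
  rcases (abs_nonneg (f x0)).eq_or_lt with hM | hM
  · rw [← hM]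
    simp only [zero_div, ne_eq, Nat.add_eq_zero_iff, OfNat.ofNat_ne_zero, and_false, not_false_eq_true, zero_pow, mul_zero]
    positivity
  have hML : |f x0| ≤ L := by
    have := hlip x0 0
    have h0 : f 0 = 0 := by
      have := tsfn_smul hK le_rfl (0 : Eu n)
      simp only [zero_smul, zero_mul] at this
      simp [hf, this]
    rwa [h0, sub_zero, sub_zero, sph_norm, mul_one] at this
  have hcap := cap_bound hL0 hlip x0 hM rfl rfl (by
    rw [div_le_one (by positivity)]; linarith)
  set v := (volume (ball (0 : Eu n) 1)).toReal
  set M := |f x0|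
  have hfin : v * (M / (4 * L)) ^ n * M ^ 2 ≤ 2 ^ (n + 3) * (2 * ε * (ω * (4 * (n + 1) * T) ^ 2)) :=
    hcap.trans (by gcongr)
  have e1 : M / (4 * L) = (M / T) / (20 * (n + 1)) := by rw [hL]; field_simp; norm_num
  rw [e1, div_pow] at hfin
  have e2 : v * (M / T) ^ (n + 2) = (v * ((M / T) ^ n / (20 * ((n:ℝ) + 1)) ^ n) * M ^ 2) * ((20 * ((n:ℝ) + 1)) ^ n / T ^ 2) := by
    rw [pow_add (M / T) n 2, div_pow M T 2]
    field_simp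
  rw [e2]
  calc _ ≤ (2 ^ (n + 3) * (2 * ε * (ω * (4 * (n + 1) * T) ^ 2))) * ((20 * ((n:ℝ) + 1)) ^ n / T ^ 2) := by gcongr
    _ = _ := by field_simp

/-- There exist `ε₀, c₂ > 0` depending only on `n` such that if `K` is a smooth,
strictly convex body with the origin in its interior and `1−ε ≤ h/𝒦 ≤ 1+ε` on `S^n`
for some `ε ∈ (0, ε₀)`, then `δ_H(K̄, B) ≤ c₂ ε^{1/(n+2)}`, where `K̄` has support
function `h̃ / ⨍ h̃ dθ` and `h_B ≡ 1`. -/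
theorem hausdorff_stability (n : ℕ) (hn : 1 ≤ n) :
    ∃ ε₀ c₂ : ℝ, 0 < ε₀ ∧ 0 < c₂ ∧
      ∀ K : Set (Eu n), IsSmoothConvexBody K → (0 : Eu n) ∈ interior K →
        ∀ ε : ℝ, ε ∈ Set.Ioo 0 ε₀ →
          (∀ x : Sph n, 1 - ε ≤ dens K (x : Eu n) ∧ dens K (x : Eu n) ≤ 1 + ε) →
          ∀ x : Sph n,
            |tsfn K (x : Eu n) / (⨍ y : Sph n, tsfn K (y : Eu n) ∂sphMeas n) - 1| ≤
              c₂ * ε ^ ((1 : ℝ) / ((n : ℝ) + 2)) := by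
  have hv : 0 < (volume (ball (0 : Eu n) 1)).toReal :=
    ENNReal.toReal_pos (measure_ball_pos _ _ one_pos).ne' measure_ball_lt_top.ne
  have hω : 0 < (sphMeas n).real Set.univ := by
    refine ENNReal.toReal_pos ?_ (measure_ne_top _ _)
    rw [sphMeas]
    exact (Measure.measure_univ_pos.2 (Measure.toSphere_ne_zero _)).ne'
  set C : ℝ := 2 ^ (n + 3) * (2 * (4 * (n + 1)) ^ 2 * (sphMeas n).real Set.univ) * (20 * (n + 1)) ^ n /
    (volume (ball (0 : Eu n) 1)).toReal with hC
  have hC0 : 0 < C := by positivity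
  refine ⟨1, C ^ ((1 : ℝ) / ((n : ℝ) + 2)), one_pos, by positivity, ?_⟩
  intro K hK h0 ε hε hd x
  have h := stab_core hn hK h0 hε.1 hε.2 hd x
  set m := |tsfn K (x : Eu n) / (⨍ y : Sph n, tsfn K (y : Eu n) ∂sphMeas n) - 1| with hm
  have hm0 : 0 ≤ m := abs_nonneg _
  have h1 : m ^ (n + 2) ≤ C * ε := by
    rw [hC, div_mul_eq_mul_div, le_div_iff₀ hv, mul_comm]; exact h
  rw [← Real.mul_rpow hC0.le hε.1.le]
  have h2 : m = (m ^ (n + 2)) ^ ((1 : ℝ) / ((n : ℝ) + 2)) := by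
    rw [← Real.rpow_natCast, ← Real.rpow_mul hm0]
    push_cast
    rw [mul_one_div_cancel (by positivity), Real.rpow_one]
  rw [h2]
  exact Real.rpow_le_rpow (by positivity) h1 (by positivity)
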